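/- Let p_1,…,p_m ∈ ℕ with each p_i ≥ 2 and Σ_{i=1}^m 1/p_i < m−1, and set G = C_{p_1} * ⋯ * C_{p_m}. Then for every nontrivial conjugacy class K of G, the average of Z_K(H) over all index n subgroups H of G is o(n) as n → ∞. (By the fixed-point characterisation of weak-* convergence of invariant random subgroups, this expresses that a uniformly random index n subgroup of G converges, as an invariant random subgroup, to the Dirac mass at the trivial subgroup.) -/

import Mathlib

open Filter Topology Asymptotics
open scoped TensorProduct

/-- the relations `x_i ^ p_i = 1` defining `C_{p_1} * ⋯ * C_{p_m}` -/
def cyclicRels (m : ℕ) (p : Fin m → ℕ) : Set (FreeGroup (Fin m)) :=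
  {w : FreeGroup (Fin m) | ∃ i : Fin m, w = FreeGroup.of i ^ p i}

/-- the free product `C_{p_1} * ⋯ * C_{p_m}` of cyclic groups of orders `p_1, …, p_m`,
presented as `⟨x_1,…,x_m ∣ x_1^{p_1} = ⋯ = x_m^{p_m} = 1⟩`. -/
abbrev CyclicFreeProduct (m : ℕ) (p : Fin m → ℕ) : Type :=
  PresentedGroup (cyclicRels m p)

/-- `Z_g(H)`: the number of fixed points of `g` acting on the coset space `G ⧸ H`.
For any `g` in a conjugacy class `K`, this equals `Z_K(H)`. -/
noncomputable def fixedCosetCount {G : Type*} [Group G] (g : G) (H : Subgroup G) : ℕ :=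
  Nat.card {x : G ⧸ H // g • x = x}

/-- the expectation of `f` over a uniformly random index `n` subgroup of `G` -/
noncomputable def subgroupExp (G : Type*) [Group G] (n : ℕ) (f : Subgroup G → ℝ) : ℝ :=
  (∑' H : {H : Subgroup G // H.index = n}, f H.1) /
    (Nat.card {H : Subgroup G // H.index = n} : ℝ)

/-!
An index `n` subgroup with labelled cosets is the same as a transitive action on `n` points with a
base point, so it is enough to show that a random action of `G` on `n` points is transitive with
probability tending to `1`, and that the mean proportion of points fixed by `g ≠ 1` tends to `0`.

An action of `G` is a tuple of independent permutations `σ i` with `σ i ^ p i = 1`. If `μ n` is the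
mean number of fixed points of a random permutation of `n` points with order dividing `p`, then
`μ n * μ (n - 1) * ⋯ * μ (n - d + 1)` is the mean number of points on `d`-cycles for `d ∣ p`. These
numbers add up to `n`, which forces `μ n ~ n ^ (1 / p)`. Hence the number `F n` of actions satisfies
`F (n + 1) / F n ~ (n + 1) ^ (m - ∑ i, 1 / p i)`, with an exponent greater than `1`, and so the
number of intransitive actions is `o (F n)`: it is at most the sum of `n.choose k * F k * F (n - k)`
over `1 ≤ k ≤ n / 2`.

For the fixed points, write `g` as a reduced word and follow its syllables from a random point. When
a syllable moves to a new point, conjugating its permutation by a transposition exchanges that point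
with any other unvisited one, so the new point is almost uniformly distributed: with probability
tending to `1` it lies outside all the cycles met before, and the walk never returns to its start.
-/

section Proportion

variable {β γ : Type*}

/-- The probability of the event `s` under the uniform law on a finite type. -/
noncomputable def proportion (s : Set β) : ℝ := s.ncard / Nat.card β

lemma proportion_nonneg (s : Set β) : 0 ≤ proportion s := by
  unfold proportion
  positivity

lemma proportion_mono [Finite β] {s t : Set β} (h : s ⊆ t) : proportion s ≤ proportion t := by
  unfold proportion
  gcongr
  exact t.toFinite

lemma proportion_union_le (s t : Set β) : proportion (s ∪ t) ≤ proportion s + proportion t := by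
  unfold proportion
  rw [← add_div]
  gcongr
  exact_mod_cast Set.ncard_union_le s t

lemma proportion_biUnion_le {κ : Type*} (t : Finset κ) (s : κ → Set β) :
    proportion (⋃ i ∈ t, s i) ≤ ∑ i ∈ t, proportion (s i) := by
  classical
  induction t using Finset.induction_on with
  | empty => simp [proportion]
  | insert i t hi ih =>
    rw [Finset.set_biUnion_insert, Finset.sum_insert hi]
    exact (proportion_union_le _ _).trans (by gcongr)

lemma proportion_add_proportion_compl [Finite β] [Nonempty β] (s : Set β) :
    proportion s + proportion sᶜ = 1 := by
  unfold proportion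
  rw [← add_div, ← Nat.cast_add, Set.ncard_add_ncard_compl,
    div_self (Nat.cast_ne_zero.mpr Nat.card_pos.ne')]

lemma proportion_preimage_equiv (e : β ≃ γ) (s : Set γ) :
    proportion (e ⁻¹' s) = proportion s := by
  unfold proportion
  rw [Nat.card_congr e, ← Set.ncard_image_of_injective _ e.injective, e.image_preimage]

lemma proportion_preimage_fst [Finite γ] [Nonempty γ] (s : Set β) :
    proportion (Prod.fst ⁻¹' s : Set (β × γ)) = proportion s := by
  unfold proportion
  rw [← Set.prod_univ, Set.ncard_prod, Set.ncard_univ, Nat.card_prod]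
  push_cast
  exact mul_div_mul_right _ _ (Nat.cast_ne_zero.mpr Nat.card_pos.ne')

lemma proportion_preimage_fst_fst_prod {δ : Type*} [Finite γ] [Nonempty γ] (s : Set (β × δ)) :
    proportion {z : (β × γ) × δ | (z.1.1, z.2) ∈ s} = proportion s := by
  let e : (β × γ) × δ ≃ (β × δ) × γ :=
    { toFun := fun z => ((z.1.1, z.2), z.1.2)
      invFun := fun z => ((z.1.1, z.2), z.1.2) }
  exact (proportion_preimage_equiv e (Prod.fst ⁻¹' s)).trans (proportion_preimage_fst s)

lemma proportion_preimage_coordinate {ι δ : Type*} {β : ι → Type*} [Finite ι] [∀ i, Finite (β i)]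
    [∀ i, Nonempty (β i)] (i : ι) (s : Set (β i × δ)) :
    proportion {q : (∀ j, β j) × δ | (q.1 i, q.2) ∈ s} = proportion s := by
  classical
  exact (proportion_preimage_equiv ((Equiv.piSplitAt i β).prodCongr (Equiv.refl δ))
    {z | (z.1.1, z.2) ∈ s}).trans (proportion_preimage_fst_fst_prod s)

lemma proportion_eq_sum_fiber_div [Fintype β] [Finite γ] (s : Set (β × γ)) :
    proportion s = (∑ b, proportion {c | (b, c) ∈ s}) / Nat.card β := by
  have hcard : s.ncard = ∑ b, {c | (b, c) ∈ s}.ncard := by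
    simp only [← Nat.card_coe_set_eq]
    rw [← Nat.card_sigma]
    exact Nat.card_congr
      { toFun := fun z => ⟨z.1.1, z.1.2, z.2⟩
        invFun := fun z => ⟨(z.1, z.2.1), z.2.2⟩ }
  unfold proportion
  rw [← Finset.sum_div, div_div, hcard, Nat.card_prod, mul_comm (Nat.card β)]
  push_cast
  rfl

lemma proportion_le_of_forall_fiber_le [Finite β] [Finite γ] {s : Set (β × γ)} {ε : ℝ}
    (hε : 0 ≤ ε) (h : ∀ b, proportion {c | (b, c) ∈ s} ≤ ε) : proportion s ≤ ε := by
  have := Fintype.ofFinite β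
  rw [proportion_eq_sum_fiber_div]
  refine div_le_of_le_mul₀ (Nat.cast_nonneg _) hε ?_
  calc ∑ b, proportion {c | (b, c) ∈ s} ≤ ∑ _b : β, ε := Finset.sum_le_sum fun b _ => h b
    _ = ε * Nat.card β := by
      rw [Finset.sum_const, nsmul_eq_mul, Finset.card_univ, Nat.card_eq_fintype_card, mul_comm]

lemma proportion_mul_le_of_forall_le_fiber [Finite β] [Finite γ] {B : Set β} {s : Set (β × γ)}
    {ε : ℝ} (h : ∀ b ∈ B, ε ≤ proportion {c | (b, c) ∈ s}) :
    proportion B * ε ≤ proportion s := by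
  classical
  have := Fintype.ofFinite β
  rw [proportion_eq_sum_fiber_div, proportion, div_mul_eq_mul_div]
  gcongr
  calc B.ncard * ε = ∑ _b ∈ B.toFinset, ε := by
        rw [Finset.sum_const, nsmul_eq_mul, Set.ncard_eq_toFinset_card']
    _ ≤ ∑ b ∈ B.toFinset, proportion {c | (b, c) ∈ s} :=
        Finset.sum_le_sum fun b hb => h b (Set.mem_toFinset.mp hb)
    _ ≤ ∑ b, proportion {c | (b, c) ∈ s} :=
        Finset.sum_le_univ_sum_of_nonneg fun b => proportion_nonneg _

lemma proportion_le_of_injOn [Finite β] {s t : Set β} (f : β → β) (hf : Set.MapsTo f s t)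
    (hinj : Set.InjOn f s) : proportion s ≤ proportion t := by
  unfold proportion
  gcongr ?_ / _
  exact_mod_cast Set.ncard_le_ncard_of_injOn f hf hinj

lemma ncard_setOf_mem_list_le (l : List β) : {x | x ∈ l}.ncard ≤ l.length := by
  classical
  rw [← List.coe_toFinset, Set.ncard_coe_finset]
  exact List.toFinset_card_le l

lemma half_le_proportion_notMem_list [Finite β] [Nonempty β] {l : List β}
    (hl : 2 * l.length ≤ Nat.card β) : 1 / 2 ≤ proportion {x | x ∉ l} := by
  have hmem : proportion {x | x ∈ l} ≤ 1 / 2 := by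
    have hlen := ncard_setOf_mem_list_le l
    rw [proportion, div_le_div_iff₀ (Nat.cast_pos.mpr Nat.card_pos) two_pos, one_mul]
    exact_mod_cast (by omega : {x | x ∈ l}.ncard * 2 ≤ Nat.card β)
  have hcompl := proportion_add_proportion_compl {x | x ∈ l}
  rw [Set.compl_ofPred] at hcompl
  linarith

end Proportion

section TorsionPerm

/-- The permutations of `α` whose order divides `p`, i.e. the actions of the cyclic group of
order `p` on `α`. -/
abbrev TorsionPerm (p : ℕ) (α : Type*) : Type _ := {σ : Equiv.Perm α // σ ^ p = 1}

/-- The number of permutations of `n` points whose order divides `p`. -/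
noncomputable def torsionPermCount (p n : ℕ) : ℕ := Nat.card (TorsionPerm p (Fin n))

instance (p : ℕ) (α : Type*) : Nonempty (TorsionPerm p α) := ⟨⟨1, one_pow p⟩⟩

lemma torsionPermCount_pos (p n : ℕ) : 0 < torsionPermCount p n := Nat.card_pos

variable {p : ℕ} {α ι : Type*}

lemma card_torsionPerm [Finite α] : Nat.card (TorsionPerm p α) = torsionPermCount p (Nat.card α) :=
  Nat.card_congr <| (Finite.equivFin α).permCongrHom.toEquiv.subtypeEquiv fun σ => by
    rw [MulEquiv.toEquiv_eq_coe, MulEquiv.coe_toEquiv, ← map_pow,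
      map_eq_one_iff _ (MulEquiv.injective _)]

lemma card_torsionPerm_fixing [Finite α] (s : Set α) :
    Nat.card {σ : TorsionPerm p α // ∀ x ∈ s, σ.1 x = x} =
      torsionPermCount p (Nat.card α - s.ncard) := by
  classical
  rw [← Set.ncard_compl, ← Nat.card_coe_set_eq, ← card_torsionPerm]
  refine (Nat.card_congr (Equiv.ofBijective (fun τ : TorsionPerm p (sᶜ : Set α) =>
    (⟨⟨Equiv.Perm.ofSubtype τ.1, by rw [← map_pow, τ.2, map_one]⟩,
      fun x hx => Equiv.Perm.ofSubtype_apply_of_not_mem _ (Set.notMem_compl_iff.mpr hx)⟩ :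
      {σ : TorsionPerm p α // ∀ x ∈ s, σ.1 x = x})) ⟨?_, ?_⟩)).symm
  · intro τ τ' h
    exact Subtype.ext (Equiv.Perm.ofSubtype_injective (congrArg (fun σ => σ.1.1) h))
  · rintro ⟨⟨σ, hσ⟩, hfix⟩
    obtain ⟨τ, hτ⟩ := (Equiv.Perm.subtypeEquivSubtypePerm (· ∈ sᶜ)).surjective
      ⟨σ, fun x hx => hfix x (Set.notMem_compl_iff.mp hx)⟩
    have hτσ : Equiv.Perm.ofSubtype τ = σ := congrArg Subtype.val hτ
    have hτp : τ ^ p = 1 := Equiv.Perm.ofSubtype_injective (by rw [map_pow, hτσ, hσ, map_one])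
    exact ⟨⟨τ, hτp⟩, Subtype.ext (Subtype.ext hτσ)⟩

-- The extension of `c` is the identity off the range of `a`, and `τ` is the identity on it, so the
-- two permutations commute.
lemma mul_viaEmbedding_pow_eq_one_iff (a : ι ↪ α) (c : TorsionPerm p ι) {τ : Equiv.Perm α}
    (hτ : ∀ x ∈ Set.range a, τ x = x) : (τ * c.1.viaEmbedding a) ^ p = 1 ↔ τ ^ p = 1 := by
  have hdisj : τ.Disjoint (c.1.viaEmbedding a) := fun x => by
    by_cases hx : x ∈ Set.range a
    exacts [Or.inl (hτ x hx), Or.inr (c.1.viaEmbedding_apply_of_notMem a x hx)]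
  rw [hdisj.commute.mul_pow, ← Equiv.Perm.viaEmbeddingHom_apply, ← map_pow, c.2, map_one, mul_one]

lemma card_torsionPerm_extending [Finite α] (a : ι ↪ α) (c : TorsionPerm p ι) :
    Nat.card {σ : TorsionPerm p α // ∀ i, σ.1 (a i) = a (c.1 i)} =
      torsionPermCount p (Nat.card α - Nat.card ι) := by
  have hext (τ : Equiv.Perm α) : (∀ x ∈ Set.range a, τ x = x) ↔
      ∀ i, (τ * c.1.viaEmbedding a) (a i) = a (c.1 i) := by
    simp only [Set.forall_mem_range, Equiv.Perm.mul_apply, Equiv.Perm.viaEmbedding_apply]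
    exact (c.1.forall_congr_right (q := fun i => τ (a i) = a i)).symm
  rw [← Set.ncard_range_of_injective a.injective, ← card_torsionPerm_fixing]
  refine (Nat.card_congr ?_).symm
  refine (Equiv.subtypeSubtypeEquivSubtypeInter (fun τ : Equiv.Perm α => τ ^ p = 1)
    fun τ => ∀ x ∈ Set.range a, τ x = x).trans (Equiv.trans ?_
      (Equiv.subtypeSubtypeEquivSubtypeInter (fun σ : Equiv.Perm α => σ ^ p = 1)
        fun σ => ∀ i, σ (a i) = a (c.1 i)).symm)
  refine (Equiv.mulRight (c.1.viaEmbedding a)).subtypeEquiv fun τ => ?_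
  rw [Equiv.coe_mulRight, ← hext]
  exact and_congr_left fun hτ => (mul_viaEmbedding_pow_eq_one_iff a c hτ).symm

lemma card_torsionPerm_prod_embedding [Finite α] [Finite ι] (c : TorsionPerm p ι) :
    Nat.card {q : TorsionPerm p α × (ι ↪ α) // ∀ i, q.1.1 (q.2 i) = q.2 (c.1 i)} =
      (Nat.card α).descFactorial (Nat.card ι) * torsionPermCount p (Nat.card α - Nat.card ι) := by
  have := Fintype.ofFinite α
  have := Fintype.ofFinite ι
  have e : {q : TorsionPerm p α × (ι ↪ α) // ∀ i, q.1.1 (q.2 i) = q.2 (c.1 i)} ≃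
      Σ a : ι ↪ α, {σ : TorsionPerm p α // ∀ i, σ.1 (a i) = a (c.1 i)} :=
    { toFun := fun q => ⟨q.1.2, q.1.1, q.2⟩
      invFun := fun s => ⟨(s.2.1, s.1), s.2.2⟩ }
  classical
  rw [Nat.card_congr e, Nat.card_sigma]
  simp only [card_torsionPerm_extending, Finset.sum_const, smul_eq_mul, Finset.card_univ]
  rw [Fintype.card_embedding_eq, Nat.card_eq_fintype_card, Nat.card_eq_fintype_card]

lemma sum_card_fixedPoints_descFactorial [Fintype (TorsionPerm p α)] [Finite α] (d : ℕ) :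
    ∑ σ : TorsionPerm p α, (Nat.card {x // σ.1 x = x}).descFactorial d =
      (Nat.card α).descFactorial d * torsionPermCount p (Nat.card α - d) := by
  classical
  have e : {q : TorsionPerm p α × (Fin d ↪ α) // ∀ i, q.1.1 (q.2 i) = q.2 i} ≃
      Σ σ : TorsionPerm p α, (Fin d ↪ {x // σ.1 x = x}) :=
    { toFun := fun q => ⟨q.1.1, q.1.2.codRestrict _ q.2⟩
      invFun := fun s => ⟨(s.1, s.2.trans (Function.Embedding.subtype _)), fun i => (s.2 i).2⟩ }
  have hcount := card_torsionPerm_prod_embedding (α := α) ⟨(1 : Equiv.Perm (Fin d)), one_pow p⟩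
  rw [Nat.card_fin] at hcount
  rw [← hcount]
  refine Eq.trans ?_ (Nat.card_congr e).symm
  rw [Nat.card_sigma]
  refine Finset.sum_congr rfl fun σ _ => ?_
  have := Fintype.ofFinite {x // σ.1 x = x}
  simp only [Nat.card_eq_fintype_card, Fintype.card_embedding_eq, Fintype.card_fin]

lemma iterate_apply_zero_of_apply_eq_add_one {d : ℕ} {f : α → α} {a : ZMod d → α}
    (ha : ∀ j, f (a j) = a (j + 1)) (k : ℕ) : f^[k] (a 0) = a k := by
  induction k with
  | zero => simp
  | succ k ih => rw [Function.iterate_succ_apply', ih, ha, Nat.cast_succ]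

lemma minimalPeriod_apply_zero {d : ℕ} {f : α → α} {a : ZMod d ↪ α}
    (ha : ∀ j, f (a j) = a (j + 1)) : Function.minimalPeriod f (a 0) = d := by
  refine Nat.dvd_antisymm ?_ ?_
  · rw [← Function.isPeriodicPt_iff_minimalPeriod_dvd, Function.IsPeriodicPt, Function.IsFixedPt,
      iterate_apply_zero_of_apply_eq_add_one ha, ZMod.natCast_self]
  · rw [← ZMod.natCast_eq_zero_iff, ← a.apply_eq_iff_eq,
      ← iterate_apply_zero_of_apply_eq_add_one ha, Function.iterate_minimalPeriod]

lemma exists_embedding_of_minimalPeriod_eq {d : ℕ} [NeZero d] {f : α → α} {x : α}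
    (hx : Function.minimalPeriod f x = d) :
    ∃ a : ZMod d ↪ α, a 0 = x ∧ ∀ j, f (a j) = a (j + 1) := by
  have hinj : Function.Injective fun j : ZMod d => f^[j.val] x := fun i j hij =>
    ZMod.val_injective d (Function.iterate_injOn_Iio_minimalPeriod
      (hx ▸ ZMod.val_lt i) (hx ▸ ZMod.val_lt j) hij)
  refine ⟨⟨_, hinj⟩, by simp, fun j => ?_⟩
  have hval : (j + 1).val = (j.val + 1) % d := by
    rw [← ZMod.val_natCast, Nat.cast_succ, ZMod.natCast_zmod_val]
  have hmod := Function.iterate_mod_minimalPeriod_eq (f := f) (x := x) (n := j.val + 1)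
  rw [Function.Embedding.coeFn_mk, hval, ← Function.iterate_succ_apply' f, ← hmod, hx]

lemma ncard_minimalPeriod_eq [Finite α] {d : ℕ} (hd : d ≠ 0) (hdp : d ∣ p) :
    {z : TorsionPerm p α × α | Function.minimalPeriod z.1.1 z.2 = d}.ncard =
      (Nat.card α).descFactorial d * torsionPermCount p (Nat.card α - d) := by
  have := NeZero.mk hd
  have hrot : Equiv.addRight (1 : ZMod d) ^ p = 1 := by
    have hp : (p : ZMod d) = 0 := (ZMod.natCast_eq_zero_iff p d).mpr hdp
    ext j
    simp [hp]
  have hcount := card_torsionPerm_prod_embedding (α := α)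
    (⟨Equiv.addRight (1 : ZMod d), hrot⟩ : TorsionPerm p (ZMod d))
  rw [Nat.card_zmod] at hcount
  rw [← Nat.card_coe_set_eq, ← hcount]
  refine (Nat.card_congr (Equiv.ofBijective (fun q =>
    ⟨(q.1.1, q.1.2 0), minimalPeriod_apply_zero q.2⟩) ⟨?_, ?_⟩)).symm
  · rintro ⟨⟨σ, a⟩, ha⟩ ⟨⟨τ, b⟩, hb⟩ h
    simp only [Subtype.mk.injEq, Prod.mk.injEq] at h
    obtain ⟨rfl, h0⟩ := h
    have hab : a = b := by
      ext j
      rw [← ZMod.natCast_zmod_val j, ← iterate_apply_zero_of_apply_eq_add_one ha, h0,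
        iterate_apply_zero_of_apply_eq_add_one hb]
    rw [Subtype.mk.injEq, hab]
  · rintro ⟨⟨σ, x⟩, hx⟩
    obtain ⟨a, rfl, ha⟩ := exists_embedding_of_minimalPeriod_eq hx
    exact ⟨⟨(σ, a), ha⟩, rfl⟩

end TorsionPerm

section MeanFixedPoints

/-- The mean number of fixed points of a uniformly random permutation of `n` points whose order
divides `p`: each point is fixed with probability
`torsionPermCount p (n - 1) / torsionPermCount p n`. -/
noncomputable def meanFixedPoints (p n : ℕ) : ℝ :=
  n * torsionPermCount p (n - 1) / torsionPermCount p n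

lemma meanFixedPoints_nonneg (p n : ℕ) : 0 ≤ meanFixedPoints p n := by
  unfold meanFixedPoints
  positivity

lemma prod_meanFixedPoints (p n d : ℕ) :
    ∏ j ∈ Finset.range d, meanFixedPoints p (n - j) =
      (n.descFactorial d * torsionPermCount p (n - d) : ℕ) / torsionPermCount p n := by
  have hne (k : ℕ) : (torsionPermCount p k : ℝ) ≠ 0 :=
    Nat.cast_ne_zero.mpr (torsionPermCount_pos p k).ne'
  induction d with
  | zero => simp [hne]
  | succ d ih =>
    rw [Finset.prod_range_succ, ih, meanFixedPoints, Nat.descFactorial_succ, Nat.sub_sub]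
    push_cast
    field_simp [hne]

lemma sum_card_fixedPoints_descFactorial_eq_mul_prod (p n d : ℕ) :
    ∑ σ : TorsionPerm p (Fin n), ((Nat.card {x // σ.1 x = x}).descFactorial d : ℝ) =
      torsionPermCount p n * ∏ j ∈ Finset.range d, meanFixedPoints p (n - j) := by
  rw [prod_meanFixedPoints,
    mul_div_cancel₀ _ (Nat.cast_ne_zero.mpr (torsionPermCount_pos p n).ne'), ← Nat.cast_sum,
    sum_card_fixedPoints_descFactorial, Nat.card_fin]

-- With `μ = meanFixedPoints p`, the second factorial moment of the number of fixed points is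
-- `μ n * μ (n - 1)`, and by Cauchy–Schwarz it is at least `μ n ^ 2 - μ n`.
lemma meanFixedPoints_sub_one_le (p n : ℕ) :
    meanFixedPoints p n - 1 ≤ meanFixedPoints p (n - 1) := by
  rcases (meanFixedPoints_nonneg p n).eq_or_lt with hμ | hμ
  · linarith [meanFixedPoints_nonneg p (n - 1)]
  have hT : (0 : ℝ) < torsionPermCount p n := Nat.cast_pos.mpr (torsionPermCount_pos p n)
  let F (σ : TorsionPerm p (Fin n)) : ℝ := Nat.card {x // σ.1 x = x}
  have hfirst : ∑ σ, F σ = torsionPermCount p n * meanFixedPoints p n := by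
    simpa only [Nat.descFactorial_one, Finset.prod_range_one, Nat.sub_zero] using
      sum_card_fixedPoints_descFactorial_eq_mul_prod p n 1
  have hsecond : ∑ σ, F σ * (F σ - 1) =
      torsionPermCount p n * (meanFixedPoints p n * meanFixedPoints p (n - 1)) := by
    simpa only [Nat.cast_descFactorial_two, Finset.prod_range_succ, Finset.prod_range_zero,
      Nat.sub_zero, one_mul] using
      sum_card_fixedPoints_descFactorial_eq_mul_prod p n 2
  have hcauchy : (∑ σ, F σ) ^ 2 ≤ torsionPermCount p n * ∑ σ, F σ ^ 2 := by
    have := sq_sum_le_card_mul_sum_sq (s := Finset.univ) (f := F)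
    rwa [Finset.card_univ, ← Nat.card_eq_fintype_card] at this
  have hsum : ∑ σ, F σ ^ 2 = ∑ σ, F σ * (F σ - 1) + ∑ σ, F σ := by
    rw [← Finset.sum_add_distrib]
    exact Finset.sum_congr rfl fun σ _ => by ring
  rw [hsum, hfirst, hsecond] at hcauchy
  refine le_of_mul_le_mul_left (a := (torsionPermCount p n : ℝ) ^ 2 * meanFixedPoints p n) ?_
    (by positivity)
  linarith

lemma meanFixedPoints_sub_le (p n j : ℕ) :
    meanFixedPoints p n - j ≤ meanFixedPoints p (n - j) := by
  induction j with
  | zero => simp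
  | succ j ih =>
    have := meanFixedPoints_sub_one_le p (n - j)
    rw [Nat.sub_sub] at this
    push_cast
    linarith

variable {p : ℕ} {α : Type*}

lemma proportion_minimalPeriod_eq [Finite α] {d : ℕ} (hd : d ≠ 0) (hdp : d ∣ p) :
    proportion {z : TorsionPerm p α × α | Function.minimalPeriod z.1.1 z.2 = d} =
      (∏ j ∈ Finset.range d, meanFixedPoints p (Nat.card α - j)) / Nat.card α := by
  rw [proportion, ncard_minimalPeriod_eq hd hdp, Nat.card_prod, card_torsionPerm,
    prod_meanFixedPoints, div_div]
  push_cast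
  rfl

lemma minimalPeriod_dvd (σ : TorsionPerm p α) (x : α) : Function.minimalPeriod σ.1 x ∣ p := by
  rw [← Function.isPeriodicPt_iff_minimalPeriod_dvd, Function.IsPeriodicPt, Function.IsFixedPt,
    Equiv.Perm.iterate_eq_pow, σ.2, Equiv.Perm.one_apply]

lemma sum_divisors_prod_meanFixedPoints (hp : p ≠ 0) (n : ℕ) :
    ∑ d ∈ p.divisors, ∏ j ∈ Finset.range d, meanFixedPoints p (n - j) = n := by
  classical
  let periodSet (d : ℕ) : Finset (TorsionPerm p (Fin n) × Fin n) :=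
    {z | Function.minimalPeriod z.1.1 z.2 = d}
  have hT : (torsionPermCount p n : ℝ) ≠ 0 := Nat.cast_ne_zero.mpr (torsionPermCount_pos p n).ne'
  have hpartition : ∑ d ∈ p.divisors, (periodSet d).card = torsionPermCount p n * n := by
    rw [← Finset.card_eq_sum_card_fiberwise fun z _ =>
      Nat.mem_divisors.mpr ⟨minimalPeriod_dvd z.1 z.2, hp⟩, Finset.card_univ,
      ← Nat.card_eq_fintype_card, Nat.card_prod, Nat.card_fin, torsionPermCount]
  have hterm : ∀ d ∈ p.divisors, ∏ j ∈ Finset.range d, meanFixedPoints p (n - j) =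
      (periodSet d).card / torsionPermCount p n := fun d hd => by
    have hdp := Nat.dvd_of_mem_divisors hd
    have hcard := ncard_minimalPeriod_eq (α := Fin n) (ne_zero_of_dvd_ne_zero hp hdp) hdp
    rw [Nat.card_fin] at hcard
    rw [prod_meanFixedPoints, ← hcard, ← Set.ncard_coe_finset, Finset.coe_filter_univ]
  rw [Finset.sum_congr rfl hterm, ← Finset.sum_div, ← Nat.cast_sum, hpartition, Nat.cast_mul,
    mul_div_cancel_left₀ _ hT]

lemma meanFixedPoints_le (hp : p ≠ 0) (n : ℕ) :
    meanFixedPoints p n ≤ p + (n : ℝ) ^ (1 / p : ℝ) := by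
  have hn : (0 : ℝ) ≤ (n : ℝ) ^ (1 / p : ℝ) := by positivity
  rcases le_total (meanFixedPoints p n) p with hμ | hμ
  · linarith
  suffices (meanFixedPoints p n - p) ^ p ≤ ((n : ℝ) ^ (1 / p : ℝ)) ^ p by
    linarith [le_of_pow_le_pow_left₀ hp hn this]
  calc (meanFixedPoints p n - p) ^ p = ∏ _j ∈ Finset.range p, (meanFixedPoints p n - p) := by simp
    _ ≤ ∏ j ∈ Finset.range p, meanFixedPoints p (n - j) := by
        refine Finset.prod_le_prod (fun _ _ => sub_nonneg.mpr hμ) fun j hj => ?_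
        have hjp : (j : ℝ) ≤ p := Nat.cast_le.mpr (Finset.mem_range.mp hj).le
        linarith [meanFixedPoints_sub_le p n j]
    _ ≤ ∑ d ∈ p.divisors, ∏ j ∈ Finset.range d, meanFixedPoints p (n - j) :=
        Finset.single_le_sum
          (f := fun d => ∏ j ∈ Finset.range d, meanFixedPoints p (n - j))
          (fun d _ => Finset.prod_nonneg fun j _ => meanFixedPoints_nonneg p _)
          (Nat.mem_divisors_self p hp)
    _ = ((n : ℝ) ^ (1 / p : ℝ)) ^ p := by
        rw [sum_divisors_prod_meanFixedPoints hp, one_div,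
          Real.rpow_inv_natCast_pow n.cast_nonneg hp]

lemma prod_meanFixedPoints_le_pow (hp : p ≠ 0) (n : ℕ) (s : Finset ℕ) :
    ∏ j ∈ s, meanFixedPoints p (n - j) ≤ (p + (n : ℝ) ^ (1 / p : ℝ)) ^ s.card := by
  calc ∏ j ∈ s, meanFixedPoints p (n - j) ≤ ∏ _j ∈ s, (p + (n : ℝ) ^ (1 / p : ℝ)) := by
        refine Finset.prod_le_prod (fun j _ => meanFixedPoints_nonneg p _) fun j _ => ?_
        refine (meanFixedPoints_le hp (n - j)).trans ?_
        gcongr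
        exact n.sub_le j
    _ = (p + (n : ℝ) ^ (1 / p : ℝ)) ^ s.card := Finset.prod_const _

lemma sum_properDivisors_prod_meanFixedPoints_le (hp : p ≠ 0) (n : ℕ) :
    ∑ d ∈ p.properDivisors, ∏ j ∈ Finset.range d, meanFixedPoints p (n - j) ≤
      p * (p + (n : ℝ) ^ (1 / p : ℝ)) ^ (p - 1) := by
  have hU : 1 ≤ p + (n : ℝ) ^ (1 / p : ℝ) :=
    le_add_of_le_of_nonneg (Nat.one_le_cast.mpr (Nat.pos_of_ne_zero hp)) (by positivity)
  have hterm : ∀ d ∈ p.properDivisors, ∏ j ∈ Finset.range d, meanFixedPoints p (n - j) ≤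
      (p + (n : ℝ) ^ (1 / p : ℝ)) ^ (p - 1) := fun d hd => by
    refine (prod_meanFixedPoints_le_pow hp n _).trans (pow_le_pow_right₀ hU ?_)
    rw [Finset.card_range]
    exact Nat.le_sub_one_of_lt (Nat.mem_properDivisors.mp hd).2
  refine (Finset.sum_le_card_nsmul _ _ _ hterm).trans ?_
  rw [nsmul_eq_mul]
  gcongr
  exact (Finset.card_filter_le _ _).trans (by simp)

lemma le_meanFixedPoints_add_mul_pow (hp : p ≠ 0) (n : ℕ) :
    n ≤ (meanFixedPoints p n + p) * (p + (n : ℝ) ^ (1 / p : ℝ)) ^ (p - 1) := by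
  have hself : ∏ j ∈ Finset.range p, meanFixedPoints p (n - j) ≤
      meanFixedPoints p n * (p + (n : ℝ) ^ (1 / p : ℝ)) ^ (p - 1) := by
    have h0 : 0 ∈ Finset.range p := Finset.mem_range.mpr (Nat.pos_of_ne_zero hp)
    have hcard : ((Finset.range p).erase 0).card = p - 1 := by
      rw [Finset.card_erase_of_mem h0, Finset.card_range]
    rw [← Finset.mul_prod_erase _ _ h0, ← hcard]
    exact mul_le_mul_of_nonneg_left (prod_meanFixedPoints_le_pow hp n _)
      (meanFixedPoints_nonneg p n)
  have hsum := sum_divisors_prod_meanFixedPoints hp n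
  rw [← Nat.insert_self_properDivisors hp, Finset.sum_insert Nat.self_notMem_properDivisors]
    at hsum
  linarith [sum_properDivisors_prod_meanFixedPoints_le hp n]

lemma tendsto_natCast_rpow_one_div_atTop (hp : p ≠ 0) :
    Tendsto (fun n : ℕ => (n : ℝ) ^ (1 / p : ℝ)) atTop atTop :=
  (tendsto_rpow_atTop (by positivity)).comp tendsto_natCast_atTop_atTop

lemma rpow_one_div_pow_mul (hp : p ≠ 0) (n : ℕ) :
    ((n : ℝ) ^ (1 / p : ℝ)) ^ (p - 1) * (n : ℝ) ^ (1 / p : ℝ) = n := by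
  rw [← pow_succ, Nat.sub_one_add_one hp, one_div, Real.rpow_inv_natCast_pow n.cast_nonneg hp]

lemma tendsto_const_add_div_self_pow (c : ℝ) (k : ℕ) :
    Tendsto (fun t : ℝ => ((c + t) / t) ^ k) atTop (𝓝 1) := by
  have h : Tendsto (fun t : ℝ => (c / t + 1) ^ k) atTop (𝓝 ((0 + 1) ^ k)) :=
    ((tendsto_id.const_div_atTop c).add_const 1).pow k
  rw [zero_add, one_pow] at h
  refine h.congr' ?_
  filter_upwards [eventually_ne_atTop 0] with t ht
  rw [div_add_one ht]

lemma tendsto_meanFixedPoints_div_rpow (hp : p ≠ 0) :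
    Tendsto (fun n : ℕ => meanFixedPoints p n / (n : ℝ) ^ (1 / p : ℝ)) atTop (𝓝 1) := by
  have ht := tendsto_natCast_rpow_one_div_atTop hp
  have hsmall : Tendsto (fun n : ℕ => (p : ℝ) / (n : ℝ) ^ (1 / p : ℝ)) atTop (𝓝 0) :=
    ht.const_div_atTop _
  have hlower := (((tendsto_const_add_div_self_pow p (p - 1)).inv₀ one_ne_zero).comp ht).sub hsmall
  have hupper := hsmall.add_const 1
  rw [inv_one, sub_zero] at hlower
  rw [zero_add] at hupper
  refine tendsto_of_tendsto_of_tendsto_of_le_of_le' hlower hupper ?_ ?_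
  · filter_upwards [ht.eventually_gt_atTop 0] with n hn
    have hle := le_meanFixedPoints_add_mul_pow hp n
    nth_rw 1 [← rpow_one_div_pow_mul hp n] at hle
    rw [Function.comp_apply, sub_le_iff_le_add, ← add_div, ← inv_pow, inv_div, div_pow,
      div_le_div_iff₀ (by positivity) hn]
    exact hle
  · filter_upwards [ht.eventually_gt_atTop 0] with n hn
    rw [div_add_one hn.ne']
    gcongr
    exact meanFixedPoints_le hp n

lemma proportion_pow_apply_eq_self_le (hp : p ≠ 0) {e : ℕ} (he : ¬ p ∣ e) (n : ℕ) :
    proportion {z : TorsionPerm p (Fin n) × Fin n | (z.1.1 ^ e) z.2 = z.2} ≤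
      p * (p + (n : ℝ) ^ (1 / p : ℝ)) ^ (p - 1) / n := by
  have hsubset : {z : TorsionPerm p (Fin n) × Fin n | (z.1.1 ^ e) z.2 = z.2} ⊆
      ⋃ d ∈ p.properDivisors, {z | Function.minimalPeriod z.1.1 z.2 = d} := by
    rintro ⟨σ, x⟩ (hx : (σ.1 ^ e) x = x)
    rw [← Equiv.Perm.iterate_eq_pow] at hx
    have hne : Function.minimalPeriod σ.1 x ≠ p := fun h =>
      he (h ▸ Function.IsPeriodicPt.minimalPeriod_dvd hx)
    simp only [Set.mem_iUnion, Set.mem_ofPred_eq, exists_prop, exists_eq_right']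
    exact Nat.mem_properDivisors.mpr ⟨minimalPeriod_dvd σ x,
      (Nat.le_of_dvd (Nat.pos_of_ne_zero hp) (minimalPeriod_dvd σ x)).lt_of_ne hne⟩
  calc proportion {z : TorsionPerm p (Fin n) × Fin n | (z.1.1 ^ e) z.2 = z.2}
      ≤ ∑ d ∈ p.properDivisors,
          proportion {z : TorsionPerm p (Fin n) × Fin n | Function.minimalPeriod z.1.1 z.2 = d} :=
        (proportion_mono hsubset).trans (proportion_biUnion_le _ _)
    _ = (∑ d ∈ p.properDivisors, ∏ j ∈ Finset.range d, meanFixedPoints p (n - j)) / n := by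
        rw [Finset.sum_div]
        refine Finset.sum_congr rfl fun d hd => ?_
        have hdp := (Nat.mem_properDivisors.mp hd).1
        rw [proportion_minimalPeriod_eq (ne_zero_of_dvd_ne_zero hp hdp) hdp, Nat.card_fin]
    _ ≤ _ := by
        gcongr
        exact sum_properDivisors_prod_meanFixedPoints_le hp n

lemma tendsto_proportion_pow_apply_eq_self (hp : p ≠ 0) {e : ℕ} (he : ¬ p ∣ e) :
    Tendsto (fun n : ℕ => proportion {z : TorsionPerm p (Fin n) × Fin n | (z.1.1 ^ e) z.2 = z.2})
      atTop (𝓝 0) := by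
  have ht := tendsto_natCast_rpow_one_div_atTop hp
  have hbound := (ht.const_div_atTop (p : ℝ)).mul
    ((tendsto_const_add_div_self_pow p (p - 1)).comp ht)
  rw [zero_mul] at hbound
  refine squeeze_zero (fun n => proportion_nonneg _)
    (fun n => proportion_pow_apply_eq_self_le hp he n) (hbound.congr fun n => ?_)
  rw [Function.comp_apply, div_pow, div_mul_div_comm, mul_comm ((n : ℝ) ^ (1 / p : ℝ)),
    rpow_one_div_pow_mul hp n]

end MeanFixedPoints

section Convolution

lemma two_pow_le_centralBinom (k : ℕ) : 2 ^ k ≤ k.centralBinom := by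
  induction k with
  | zero => simp
  | succ k ih =>
    refine Nat.le_of_mul_le_mul_left ?_ k.succ_pos
    rw [Nat.succ_eq_add_one, Nat.succ_mul_centralBinom_succ, pow_succ]
    nlinarith

lemma two_pow_le_choose {n k : ℕ} (hkn : 2 * k ≤ n) : 2 ^ k ≤ n.choose k :=
  (two_pow_le_centralBinom k).trans (Nat.choose_le_choose k hkn)

lemma self_le_choose {n k : ℕ} (hk : k ≠ 0) (hkn : k < n) : n ≤ n.choose k := by
  induction n, hkn using Nat.le_induction with
  | base => rw [Nat.choose_succ_self_right]
  | succ n hn ih =>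
    obtain ⟨j, rfl⟩ := Nat.exists_eq_succ_of_ne_zero hk
    have hpos : 0 < n.choose j := Nat.choose_pos (by lia)
    rw [Nat.choose_succ_succ']
    lia

lemma choose_rpow_neg_le {n k : ℕ} (hk : k ≠ 0) (hkn : 2 * k ≤ n) {ε : ℝ} (hε : 0 ≤ ε) :
    (n.choose k : ℝ) ^ (-(2 * ε)) ≤ (n : ℝ) ^ (-ε) * ((2 : ℝ) ^ (-ε)) ^ k := by
  have hn : (0 : ℝ) < n := Nat.cast_pos.mpr (by lia)
  have hchoose : (0 : ℝ) < n.choose k := Nat.cast_pos.mpr (Nat.choose_pos (by lia))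
  rw [two_mul, neg_add, Real.rpow_add hchoose, Real.rpow_pow_comm two_pos.le]
  gcongr ?_ * ?_
  · refine Real.rpow_le_rpow_of_nonpos hn ?_ (neg_nonpos.mpr hε)
    exact_mod_cast self_le_choose hk (by lia)
  · refine Real.rpow_le_rpow_of_nonpos (by positivity) ?_ (neg_nonpos.mpr hε)
    exact_mod_cast two_pow_le_choose hkn

variable {b : ℕ → ℝ}

lemma eventually_forall_le_mul_pow (hb : ∀ n, 0 < b n)
    (hratio : Tendsto (fun n => b n / b (n + 1)) atTop (𝓝 1)) {q : ℝ} (hq : 1 < q) :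
    ∀ᶠ n in atTop, ∀ k, b n ≤ b (n + k) * q ^ k := by
  obtain ⟨N, hN⟩ := eventually_atTop.mp (hratio.eventually_lt_const hq)
  filter_upwards [eventually_ge_atTop N] with n hn k
  induction k with
  | zero => simp
  | succ k ih =>
    have hstep : b (n + k) ≤ q * b (n + k + 1) :=
      ((div_lt_iff₀ (hb _)).mp (hN (n + k) (by lia))).le
    calc b n ≤ b (n + k) * q ^ k := ih
      _ ≤ q * b (n + k + 1) * q ^ k := by gcongr
      _ = b (n + (k + 1)) * q ^ (k + 1) := by rw [pow_succ]; ring_nf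

lemma exists_forall_le_mul_pow (hb : ∀ n, 0 < b n)
    (hratio : Tendsto (fun n => b n / b (n + 1)) atTop (𝓝 1)) {q : ℝ} (hq : 1 < q) :
    ∃ C, 0 < C ∧ ∀ n, b n ≤ C * q ^ n := by
  have hratio_inv : Tendsto (fun n => (b n)⁻¹ / (b (n + 1))⁻¹) atTop (𝓝 1) := by
    simpa only [inv_div, inv_one, inv_div_inv] using hratio.inv₀ one_ne_zero
  obtain ⟨N, hN⟩ :=
    (eventually_forall_le_mul_pow (fun n => inv_pos.mpr (hb n)) hratio_inv hq).exists
  have : 0 < q := one_pos.trans hq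
  have hbigO : b =O[atTop] (q ^ · : ℕ → ℝ) := by
    refine .of_bound (b N) ?_
    filter_upwards [eventually_ge_atTop N] with n hn
    obtain ⟨k, rfl⟩ := Nat.exists_eq_add_of_le hn
    have hle := hN k
    rw [inv_mul_eq_div, inv_eq_one_div, div_le_div_iff₀ (hb _) (hb _), one_mul, mul_comm] at hle
    rw [Real.norm_of_nonneg (hb _).le, Real.norm_of_nonneg (by positivity)]
    exact hle.trans (mul_le_mul_of_nonneg_left (pow_le_pow_right₀ hq.le (by lia)) (hb N).le)
  obtain ⟨C, hC, hbound⟩ := bound_of_isBigO_nat_atTop hbigO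
  refine ⟨C, hC, fun n => ?_⟩
  have hn := hbound (x := n) (by positivity)
  rwa [Real.norm_of_nonneg (hb _).le, Real.norm_of_nonneg (by positivity)] at hn

lemma exists_eventually_mul_le (hb : ∀ n, 0 < b n)
    (hratio : Tendsto (fun n => b n / b (n + 1)) atTop (𝓝 1)) {q : ℝ} (hq : 1 < q) :
    ∃ C, 0 < C ∧ ∀ᶠ n in atTop, ∀ k, 2 * k ≤ n → b k * b (n - k) / b n ≤ C * q ^ k := by
  have hsqrt : 1 < √q := Real.lt_sqrt_of_sq_lt (by simpa using hq)
  obtain ⟨C, hC, hgrowth⟩ := exists_forall_le_mul_pow hb hratio hsqrt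
  obtain ⟨N, hN⟩ := eventually_atTop.mp (eventually_forall_le_mul_pow hb hratio hsqrt)
  refine ⟨C, hC, ?_⟩
  filter_upwards [eventually_ge_atTop (2 * N)] with n hn k hkn
  have hshift := hN (n - k) (by lia) k
  rw [Nat.sub_add_cancel (by lia)] at hshift
  rw [div_le_iff₀ (hb n)]
  calc b k * b (n - k) ≤ (C * √q ^ k) * (b n * √q ^ k) :=
        mul_le_mul (hgrowth k) hshift (hb _).le (by positivity)
    _ = C * (√q * √q) ^ k * b n := by rw [mul_pow]; ring
    _ = C * q ^ k * b n := by rw [Real.mul_self_sqrt (zero_le_one.trans hq.le)]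

lemma exists_eventually_choose_rpow_neg_mul_le (hb : ∀ n, 0 < b n)
    (hratio : Tendsto (fun n => b n / b (n + 1)) atTop (𝓝 1)) {ε : ℝ} (hε : 0 < ε) :
    ∃ C, 0 < C ∧ ∀ᶠ n : ℕ in atTop, ∀ k ≠ 0, 2 * k ≤ n →
      (n.choose k : ℝ) ^ (-(2 * ε)) * (b k * b (n - k) / b n) ≤
        C * (n : ℝ) ^ (-ε) * ((2 : ℝ) ^ (-(ε / 2))) ^ k := by
  have hq : (1 : ℝ) < 2 ^ (ε / 2) := Real.one_lt_rpow one_lt_two (half_pos hε)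
  obtain ⟨C, hC, hev⟩ := exists_eventually_mul_le hb hratio hq
  refine ⟨C, hC, ?_⟩
  filter_upwards [hev] with n hn k hk hkn
  have hnonneg : 0 ≤ b k * b (n - k) / b n :=
    div_nonneg (mul_nonneg (hb k).le (hb _).le) (hb n).le
  calc (n.choose k : ℝ) ^ (-(2 * ε)) * (b k * b (n - k) / b n)
      ≤ ((n : ℝ) ^ (-ε) * ((2 : ℝ) ^ (-ε)) ^ k) * (C * ((2 : ℝ) ^ (ε / 2)) ^ k) :=
        mul_le_mul (choose_rpow_neg_le hk hkn hε.le) (hn k hkn) hnonneg (by positivity)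
    _ = C * (n : ℝ) ^ (-ε) * ((2 : ℝ) ^ (-ε) * (2 : ℝ) ^ (ε / 2)) ^ k := by
        rw [mul_pow]
        ring
    _ = C * (n : ℝ) ^ (-ε) * ((2 : ℝ) ^ (-(ε / 2))) ^ k := by
        rw [← Real.rpow_add two_pos]
        ring_nf

lemma tendsto_sum_choose_rpow_neg_mul (hb : ∀ n, 0 < b n)
    (hratio : Tendsto (fun n => b n / b (n + 1)) atTop (𝓝 1)) {ε : ℝ} (hε : 0 < ε) :
    Tendsto (fun n : ℕ => ∑ k ∈ Finset.Icc 1 (n / 2),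
      (n.choose k : ℝ) ^ (-(2 * ε)) * (b k * b (n - k) / b n)) atTop (𝓝 0) := by
  obtain ⟨C, hC, hev⟩ := exists_eventually_choose_rpow_neg_mul_le hb hratio hε
  set ρ : ℝ := 2 ^ (-(ε / 2))
  have hρ : ρ < 1 := Real.rpow_lt_one_of_one_lt_of_neg one_lt_two (by linarith)
  have hlim : Tendsto (fun n : ℕ => C * (n : ℝ) ^ (-ε) * (1 - ρ)⁻¹) atTop (𝓝 0) := by
    simpa using (((tendsto_rpow_neg_atTop hε).comp tendsto_natCast_atTop_atTop).const_mul
      C).mul_const (1 - ρ)⁻¹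
  refine tendsto_of_tendsto_of_tendsto_of_le_of_le' tendsto_const_nhds hlim
    (.of_forall fun n => Finset.sum_nonneg fun k _ => mul_nonneg (by positivity)
      (div_nonneg (mul_nonneg (hb k).le (hb _).le) (hb n).le)) ?_
  filter_upwards [hev] with n hn
  calc ∑ k ∈ Finset.Icc 1 (n / 2), (n.choose k : ℝ) ^ (-(2 * ε)) * (b k * b (n - k) / b n)
      ≤ ∑ k ∈ Finset.Icc 1 (n / 2), C * (n : ℝ) ^ (-ε) * ρ ^ k := by
        refine Finset.sum_le_sum fun k hk => ?_
        obtain ⟨hk1, hkn⟩ := Finset.mem_Icc.mp hk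
        exact hn k (by lia) (by lia)
    _ ≤ C * (n : ℝ) ^ (-ε) * (1 - ρ)⁻¹ := by
        rw [← Finset.mul_sum, ← tsum_geometric_of_lt_one (by positivity) hρ]
        gcongr
        exact (summable_geometric_of_lt_one (by positivity) hρ).sum_le_tsum _
          fun _ _ => by positivity

-- Dividing `F n` by `n! ^ (1 + δ)` leaves a sequence of subexponential growth and turns the
-- binomial coefficient into its power with exponent `-δ`.
lemma tendsto_sum_choose_mul_mul_div {F : ℕ → ℝ} (hF : ∀ n, 0 < F n) {δ : ℝ} (hδ : 0 < δ)
    (hratio : Tendsto (fun n : ℕ => F n * (n + 1 : ℝ) ^ (1 + δ) / F (n + 1)) atTop (𝓝 1)) :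
    Tendsto (fun n : ℕ => (∑ k ∈ Finset.Icc 1 (n / 2), (n.choose k : ℝ) * F k * F (n - k)) / F n)
      atTop (𝓝 0) := by
  let b (n : ℕ) : ℝ := F n / (n.factorial : ℝ) ^ (1 + δ)
  have hfac (n : ℕ) : (0 : ℝ) < (n.factorial : ℝ) ^ (1 + δ) := by positivity
  have hb (n : ℕ) : 0 < b n := div_pos (hF n) (hfac n)
  have hbratio : Tendsto (fun n => b n / b (n + 1)) atTop (𝓝 1) := by
    refine hratio.congr fun n => ?_
    have := hF (n + 1)
    have := hfac n
    simp only [b]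
    rw [Nat.factorial_succ, Nat.cast_mul, Real.mul_rpow (by positivity) (by positivity)]
    push_cast
    field_simp
  refine (tendsto_sum_choose_rpow_neg_mul hb hbratio (half_pos hδ)).congr fun n => ?_
  rw [Finset.sum_div]
  refine Finset.sum_congr rfl fun k hk => ?_
  have hkn : k ≤ n := by
    have := (Finset.mem_Icc.mp hk).2
    lia
  have hchoose : (0 : ℝ) < n.choose k := Nat.cast_pos.mpr (Nat.choose_pos hkn)
  have hmul : (n.factorial : ℝ) ^ (1 + δ) = (n.choose k : ℝ) ^ (1 + δ) *
      (k.factorial : ℝ) ^ (1 + δ) * ((n - k).factorial : ℝ) ^ (1 + δ) := by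
    rw [← Real.mul_rpow (by positivity) (by positivity),
      ← Real.mul_rpow (by positivity) (by positivity)]
    exact_mod_cast congrArg (fun t : ℕ => (t : ℝ) ^ (1 + δ))
      (Nat.choose_mul_factorial_mul_factorial hkn).symm
  have := hfac k
  have := hfac (n - k)
  have := hF n
  simp only [b]
  rw [mul_div_cancel₀ _ two_ne_zero, hmul, Real.rpow_add hchoose, Real.rpow_one,
    Real.rpow_neg hchoose.le]
  field_simp

end Convolution

section PermutationRepresentations

variable (G : Type*) [Group G]

instance (M : Type*) [Monoid M] [Finite M] [Group.FG G] : Finite (G →* M) := by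
  obtain ⟨S, hS⟩ := Group.FG.out (G := G)
  exact Finite.of_injective (fun (φ : G →* M) (s : S) => φ s) fun φ ψ h =>
    MonoidHom.eq_of_eqOn_dense hS fun s hs => congrFun h ⟨s, hs⟩

/-- The number of actions of `G` on `n` labelled points. -/
noncomputable def permRepCount (n : ℕ) : ℕ := Nat.card (G →* Equiv.Perm (Fin n))

lemma permRepCount_pos [Group.FG G] (n : ℕ) : 0 < permRepCount G n := Nat.card_pos

lemma card_permRep (α : Type*) [Finite α] :
    Nat.card (G →* Equiv.Perm α) = permRepCount G (Nat.card α) :=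
  Nat.card_congr (Finite.equivFin α).permCongrHom.monoidHomCongrRightEquiv

variable {α : Type*}

/-- The transitive actions of `G` on `α`. -/
def transitiveReps (α : Type*) : Set (G →* Equiv.Perm α) := {φ | ∀ x y, ∃ g, φ g x = y}

/-- The actions of `G` on `α` that preserve `A`. -/
def invariantReps (A : Set α) : Set (G →* Equiv.Perm α) := {φ | ∀ g x, φ g x ∈ A ↔ x ∈ A}

variable {G}

/-- The action of `G` on an invariant subset. -/
def restrictRep {A : Set α} (φ : invariantReps G A) : G →* Equiv.Perm A where
  toFun g := (φ.1 g).subtypePerm (φ.2 g)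
  map_one' := by ext; simp
  map_mul' g h := by
    ext x
    exact Equiv.congr_fun (map_mul φ.1 g h) x.1

lemma compl_mem_invariantReps {A : Set α} {φ : G →* Equiv.Perm α} (h : φ ∈ invariantReps G A) :
    φ ∈ invariantReps G Aᶜ := fun g x => not_congr (h g x)

lemma orbit_mem_invariantReps (φ : G →* Equiv.Perm α) (x : α) :
    φ ∈ invariantReps G {y | ∃ g, φ g x = y} := by
  refine fun g y => ⟨fun ⟨k, hk⟩ => ⟨g⁻¹ * k, ?_⟩, fun ⟨k, hk⟩ => ⟨g * k, ?_⟩⟩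
  · rw [map_mul, Equiv.Perm.mul_apply, hk, map_inv, Equiv.Perm.inv_def, Equiv.symm_apply_apply]
  · rw [map_mul, Equiv.Perm.mul_apply, hk]

lemma ncard_invariantReps_le [Finite α] [Group.FG G] (A : Set α) :
    (invariantReps G A).ncard ≤
      permRepCount G A.ncard * permRepCount G (Nat.card α - A.ncard) := by
  rw [← Set.ncard_compl, ← Nat.card_coe_set_eq, ← Nat.card_coe_set_eq A,
    ← Nat.card_coe_set_eq Aᶜ, ← card_permRep, ← card_permRep, ← Nat.card_prod]
  refine Nat.card_le_card_of_injective
    (fun φ => (restrictRep φ, restrictRep ⟨φ.1, compl_mem_invariantReps φ.2⟩)) fun φ ψ h => ?_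
  obtain ⟨hA, hAc⟩ := Prod.ext_iff.mp h
  ext g x
  by_cases hx : x ∈ A
  · exact congrArg Subtype.val (Equiv.congr_fun (DFunLike.congr_fun hA g) ⟨x, hx⟩)
  · exact congrArg Subtype.val (Equiv.congr_fun (DFunLike.congr_fun hAc g) ⟨x, hx⟩)

lemma exists_mem_invariantReps_of_notMem_transitiveReps [Finite α] {φ : G →* Equiv.Perm α}
    (hφ : φ ∉ transitiveReps G α) :
    ∃ A : Set α, A.ncard ∈ Finset.Icc 1 (Nat.card α / 2) ∧ φ ∈ invariantReps G A := by
  simp only [transitiveReps, Set.mem_ofPred_eq, not_forall] at hφ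
  obtain ⟨x, y, hy⟩ := hφ
  have hinv := orbit_mem_invariantReps φ x
  set A : Set α := {y | ∃ g, φ g x = y}
  have hApos : 0 < A.ncard := (Set.ncard_pos).mpr ⟨x, 1, by rw [map_one, Equiv.Perm.one_apply]⟩
  have hAcpos : 0 < Aᶜ.ncard := (Set.ncard_pos).mpr ⟨y, hy⟩
  have hsum := Set.ncard_add_ncard_compl A
  rcases le_total A.ncard Aᶜ.ncard with hle | hle
  · exact ⟨A, Finset.mem_Icc.mpr (by omega), hinv⟩
  · exact ⟨Aᶜ, Finset.mem_Icc.mpr (by omega), compl_mem_invariantReps hinv⟩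

variable (G)

lemma proportion_compl_transitiveReps_le [Group.FG G] (n : ℕ) :
    proportion (transitiveReps G (Fin n))ᶜ ≤
      (∑ k ∈ Finset.Icc 1 (n / 2), (n.choose k : ℝ) * permRepCount G k * permRepCount G (n - k)) /
        permRepCount G n := by
  have hcover : (transitiveReps G (Fin n))ᶜ ⊆ ⋃ k ∈ Finset.Icc 1 (n / 2),
      ⋃ A ∈ (Finset.univ : Finset (Fin n)).powersetCard k, invariantReps G (A : Set (Fin n)) := by
    classical
    intro φ hφ
    obtain ⟨A, hcard, hA⟩ := exists_mem_invariantReps_of_notMem_transitiveReps hφ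
    rw [Nat.card_fin, Set.ncard_eq_toFinset_card'] at hcard
    simp only [Set.mem_iUnion]
    exact ⟨A.toFinset.card, hcard, A.toFinset,
      Finset.mem_powersetCard.mpr ⟨A.toFinset.subset_univ, rfl⟩, by rwa [Set.coe_toFinset]⟩
  refine (proportion_mono hcover).trans ((proportion_biUnion_le _ _).trans ?_)
  rw [Finset.sum_div]
  refine Finset.sum_le_sum fun k _ => (proportion_biUnion_le _ _).trans ?_
  calc ∑ A ∈ (Finset.univ : Finset (Fin n)).powersetCard k,
        proportion (invariantReps G (A : Set (Fin n)))
      ≤ ∑ _A ∈ (Finset.univ : Finset (Fin n)).powersetCard k,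
        (permRepCount G k * permRepCount G (n - k) : ℝ) / permRepCount G n := by
        refine Finset.sum_le_sum fun A hA => ?_
        have hle := ncard_invariantReps_le (G := G) (A : Set (Fin n))
        rw [Set.ncard_coe_finset, (Finset.mem_powersetCard.mp hA).2, Nat.card_fin] at hle
        unfold proportion permRepCount at *
        gcongr
        exact_mod_cast hle
    _ = (n.choose k : ℝ) * permRepCount G k * permRepCount G (n - k) / permRepCount G n := by
        rw [Finset.sum_const, Finset.card_powersetCard, Finset.card_fin, nsmul_eq_mul]
        ring

lemma tendsto_proportion_transitiveReps [Group.FG G] {δ : ℝ} (hδ : 0 < δ)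
    (hratio : Tendsto (fun n : ℕ => permRepCount G n * (n + 1 : ℝ) ^ (1 + δ) /
      permRepCount G (n + 1)) atTop (𝓝 1)) :
    Tendsto (fun n => proportion (transitiveReps G (Fin n))) atTop (𝓝 1) := by
  have hcompl : Tendsto (fun n => proportion (transitiveReps G (Fin n))ᶜ) atTop (𝓝 0) :=
    squeeze_zero (fun _ => proportion_nonneg _) (proportion_compl_transitiveReps_le G)
      (tendsto_sum_choose_mul_mul_div (F := fun n => permRepCount G n)
        (fun n => Nat.cast_pos.mpr (permRepCount_pos G n)) hδ hratio)
  have heq (n : ℕ) : proportion (transitiveReps G (Fin n)) =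
      1 - proportion (transitiveReps G (Fin n))ᶜ :=
    eq_sub_of_add_eq (proportion_add_proportion_compl _)
  simpa only [heq, sub_zero] using hcompl.const_sub 1

end PermutationRepresentations

section CosetRepresentations

variable {G : Type*} [Group G] {α : Type*} {H : Subgroup G}

/-- The action of `G` on `G ⧸ H`, transported to `α` along a labelling of the cosets. -/
def cosetRep (e : G ⧸ H ≃ α) : G →* Equiv.Perm α :=
  e.permCongrHom.toMonoidHom.comp (MulAction.toPermHom G (G ⧸ H))

lemma cosetRep_apply (e : G ⧸ H ≃ α) (g : G) (x : G ⧸ H) : cosetRep e g (e x) = e (g • x) :=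
  congrArg (fun y => e (g • y)) (e.symm_apply_apply x)

lemma cosetRep_apply_one (e : G ⧸ H ≃ α) (g : G) :
    cosetRep e g (e (1 : G)) = e (g : G ⧸ H) := by
  rw [cosetRep_apply, MulAction.Quotient.smul_coe, smul_eq_mul, mul_one]

lemma cosetRep_apply_eq_self_iff (e : G ⧸ H ≃ α) (g : G) (x : G ⧸ H) :
    cosetRep e g (e x) = e x ↔ g • x = x := by
  rw [cosetRep_apply, e.injective.eq_iff]

lemma cosetRep_mem_transitiveReps (e : G ⧸ H ≃ α) : cosetRep e ∈ transitiveReps G α := by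
  refine fun x y => (MulAction.exists_smul_eq G (e.symm x) (e.symm y)).imp fun g hg => ?_
  rw [← e.apply_symm_apply x, cosetRep_apply, hg, e.apply_symm_apply]

lemma mem_iff_cosetRep_apply_one (e : G ⧸ H ≃ α) (g : G) :
    g ∈ H ↔ cosetRep e g (e (1 : G)) = e (1 : G) := by
  rw [cosetRep_apply_one, e.injective.eq_iff, eq_comm, QuotientGroup.eq, inv_one, one_mul]

lemma exists_cosetRep_eq {φ : G →* Equiv.Perm α} (hφ : φ ∈ transitiveReps G α) (v : α) :
    ∃ (H : Subgroup G) (e : G ⧸ H ≃ α), cosetRep e = φ ∧ e (1 : G) = v := by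
  let _ : MulAction G α := MulAction.compHom α φ
  let e : G ⧸ MulAction.stabilizer G v ≃ α :=
    Equiv.ofBijective (MulAction.ofQuotientStabilizer G v)
      ⟨MulAction.injective_ofQuotientStabilizer G v, fun y =>
        (hφ v y).imp' QuotientGroup.mk fun _ hg => hg⟩
  have he (g : G) : e g = φ g v := rfl
  refine ⟨_, e, MonoidHom.ext fun g => Equiv.ext fun x => ?_, by rw [he, map_one]; rfl⟩
  obtain ⟨k, rfl⟩ := hφ v x
  rw [← he, cosetRep_apply, MulAction.Quotient.smul_coe, he, he, smul_eq_mul, map_mul,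
    Equiv.Perm.mul_apply]

/-- The subgroups of index `n` in `G` equipped with a labelling of their cosets. -/
abbrev LabelledSubgroup (G : Type*) [Group G] (n : ℕ) : Type _ :=
  Σ H : {H : Subgroup G // H.index = n}, (G ⧸ H.1 ≃ Fin n)

/-- The transitive action with a base point attached to a subgroup with labelled cosets. -/
def pointedRep {n : ℕ} (z : LabelledSubgroup G n) : transitiveReps G (Fin n) × Fin n :=
  (⟨cosetRep z.2, cosetRep_mem_transitiveReps z.2⟩, z.2 (1 : G))

variable {n : ℕ}

lemma pointedRep_injective : Function.Injective (pointedRep (G := G) (n := n)) := by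
  rintro ⟨⟨H, hH⟩, e⟩ ⟨⟨K, hK⟩, f⟩ h
  have hrep : cosetRep e = cosetRep f := congrArg (fun q => q.1.1) h
  have hbase : e (1 : G) = f (1 : G) := congrArg Prod.snd h
  obtain rfl : H = K := Subgroup.ext fun g => by
    rw [mem_iff_cosetRep_apply_one e, mem_iff_cosetRep_apply_one f, hrep, hbase]
  obtain rfl : e = f := Equiv.ext fun x => by
    induction x using QuotientGroup.induction_on with
    | H g => rw [← cosetRep_apply_one e, ← cosetRep_apply_one f, hrep, hbase]
  rfl

lemma pointedRep_bijective : Function.Bijective (pointedRep (G := G) (n := n)) := by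
  refine ⟨pointedRep_injective, fun ⟨⟨φ, hφ⟩, v⟩ => ?_⟩
  obtain ⟨H, e, rfl, rfl⟩ := exists_cosetRep_eq hφ v
  exact ⟨⟨⟨H, (Nat.card_congr e).trans (Nat.card_fin n)⟩, e⟩, rfl⟩

lemma nonempty_labelling (hn : n ≠ 0) (H : {H : Subgroup G // H.index = n}) :
    Nonempty (G ⧸ H.1 ≃ Fin n) :=
  have : Finite (G ⧸ H.1) := Nat.finite_of_card_ne_zero (H.2.trans_ne hn)
  ⟨Finite.equivFinOfCardEq H.2⟩

lemma card_labelling (hn : n ≠ 0) (H : {H : Subgroup G // H.index = n}) :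
    Nat.card (G ⧸ H.1 ≃ Fin n) = n.factorial := by
  obtain ⟨e⟩ := nonempty_labelling hn H
  rw [Nat.card_congr (e.equivCongr (Equiv.refl _)), Nat.card_perm, Nat.card_fin]

lemma finite_subgroup_index_eq [Group.FG G] (hn : n ≠ 0) :
    Finite {H : Subgroup G // H.index = n} := by
  have : Finite (LabelledSubgroup G n) := Finite.of_injective _ pointedRep_injective
  refine Finite.of_surjective (Sigma.fst : LabelledSubgroup G n → _) fun H => ?_
  obtain ⟨e⟩ := nonempty_labelling hn H
  exact ⟨⟨H, e⟩, rfl⟩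

lemma card_subgroup_index_eq_mul_factorial [Group.FG G] (hn : n ≠ 0) :
    Nat.card {H : Subgroup G // H.index = n} * n.factorial =
      (transitiveReps G (Fin n)).ncard * n := by
  have := finite_subgroup_index_eq (G := G) hn
  have := Fintype.ofFinite {H : Subgroup G // H.index = n}
  have (H : {H : Subgroup G // H.index = n}) : Finite (G ⧸ H.1 ≃ Fin n) :=
    Nat.finite_of_card_ne_zero ((card_labelling hn H).trans_ne n.factorial_ne_zero)
  calc Nat.card {H : Subgroup G // H.index = n} * n.factorial
      = Nat.card (LabelledSubgroup G n) := by
        rw [Nat.card_sigma, Finset.sum_congr rfl fun H _ => card_labelling hn H, Finset.sum_const,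
          Finset.card_univ, Nat.card_eq_fintype_card, smul_eq_mul]
    _ = (transitiveReps G (Fin n)).ncard * n := by
        rw [Nat.card_congr (Equiv.ofBijective _ pointedRep_bijective), Nat.card_prod,
          Nat.card_coe_set_eq, Nat.card_fin]

/-- The pairs of a transitive action of `G` on `α` and a point fixed by `g`. -/
def transitiveRepFixedPoints (g : G) (α : Type*) : Set ((G →* Equiv.Perm α) × α) :=
  {q | q.1 ∈ transitiveReps G α ∧ q.1 g q.2 = q.2}

/-- A subgroup with labelled cosets and a coset fixed by `g` correspond to a transitive action, a
fixed point of `g` and a base point. -/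
noncomputable def labelledFixedCosetEquiv (g : G) (n : ℕ) :
    (Σ z : LabelledSubgroup G n, {x : G ⧸ z.1.1 // g • x = x}) ≃
      transitiveRepFixedPoints g (Fin n) × Fin n :=
  (Equiv.sigmaCongr (β₂ := fun q => {v : Fin n // q.1.1 g v = v})
    (Equiv.ofBijective _ pointedRep_bijective) fun z =>
      z.2.subtypeEquiv fun x => (cosetRep_apply_eq_self_iff z.2 g x).symm).trans
  { toFun := fun q => (⟨(q.1.1.1, q.2.1), q.1.1.2, q.2.2⟩, q.1.2)
    invFun := fun q => ⟨(⟨q.1.1.1, q.1.2.1⟩, q.2), q.1.1.2, q.1.2.2⟩ }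

lemma sum_fixedCosetCount_mul_factorial [Fintype {H : Subgroup G // H.index = n}] (hn : n ≠ 0)
    (g : G) : (∑ H : {H : Subgroup G // H.index = n}, fixedCosetCount g H.1) * n.factorial =
      (transitiveRepFixedPoints g (Fin n)).ncard * n := by
  have (H : {H : Subgroup G // H.index = n}) : Finite (G ⧸ H.1) :=
    Nat.finite_of_card_ne_zero (H.2.trans_ne hn)
  have (H : {H : Subgroup G // H.index = n}) : Finite (G ⧸ H.1 ≃ Fin n) :=
    Nat.finite_of_card_ne_zero ((card_labelling hn H).trans_ne n.factorial_ne_zero)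
  calc (∑ H : {H : Subgroup G // H.index = n}, fixedCosetCount g H.1) * n.factorial
      = Nat.card (Σ H : {H : Subgroup G // H.index = n},
          Σ _ : G ⧸ H.1 ≃ Fin n, {x : G ⧸ H.1 // g • x = x}) := by
        rw [Nat.card_sigma, Finset.sum_mul]
        refine Finset.sum_congr rfl fun H _ => ?_
        rw [Nat.card_congr (Equiv.sigmaEquivProd _ _), Nat.card_prod, card_labelling hn H, mul_comm,
          fixedCosetCount]
    _ = Nat.card (Σ z : LabelledSubgroup G n, {x : G ⧸ z.1.1 // g • x = x}) :=
        Nat.card_congr (Equiv.sigmaAssoc fun (H : {H : Subgroup G // H.index = n})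
          (_ : G ⧸ H.1 ≃ Fin n) => {x : G ⧸ H.1 // g • x = x}).symm
    _ = (transitiveRepFixedPoints g (Fin n)).ncard * n := by
        rw [Nat.card_congr (labelledFixedCosetEquiv g n), Nat.card_prod, Nat.card_coe_set_eq,
          Nat.card_fin]

lemma subgroupExp_fixedCosetCount [Group.FG G] (hn : n ≠ 0) (g : G) :
    subgroupExp G n (fun H => fixedCosetCount g H) =
      (transitiveRepFixedPoints g (Fin n)).ncard / (transitiveReps G (Fin n)).ncard := by
  have := finite_subgroup_index_eq (G := G) hn
  have := Fintype.ofFinite {H : Subgroup G // H.index = n}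
  have hn' : (n : ℝ) ≠ 0 := Nat.cast_ne_zero.mpr hn
  have hfac : (n.factorial : ℝ) ≠ 0 := Nat.cast_ne_zero.mpr n.factorial_ne_zero
  rw [subgroupExp, tsum_fintype, ← mul_div_mul_right _ _ hfac,
    ← mul_div_mul_right ((transitiveRepFixedPoints g (Fin n)).ncard : ℝ) _ hn']
  congr 1
  · exact_mod_cast sum_fixedCosetCount_mul_factorial hn g
  · exact_mod_cast card_subgroup_index_eq_mul_factorial hn

lemma subgroupExp_fixedCosetCount_div_le [Group.FG G] (hn : n ≠ 0) (g : G) :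
    subgroupExp G n (fun H => fixedCosetCount g H) / n ≤
      proportion {q : (G →* Equiv.Perm (Fin n)) × Fin n | q.1 g q.2 = q.2} /
        proportion (transitiveReps G (Fin n)) := by
  have hcard : (Nat.card (G →* Equiv.Perm (Fin n)) : ℝ) ≠ 0 :=
    Nat.cast_ne_zero.mpr Nat.card_pos.ne'
  have heq : subgroupExp G n (fun H => fixedCosetCount g H) / n =
      proportion (transitiveRepFixedPoints g (Fin n)) / proportion (transitiveReps G (Fin n)) := by
    rw [subgroupExp_fixedCosetCount hn, proportion, proportion, Nat.card_prod, Nat.card_fin]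
    push_cast
    field_simp
  rw [heq]
  gcongr
  · exact proportion_nonneg _
  · exact proportion_mono fun _ hq => hq.2

theorem subgroupExp_fixedCosetCount_isLittleO [Group.FG G]
    (htrans : Tendsto (fun n => proportion (transitiveReps G (Fin n))) atTop (𝓝 1)) {g : G}
    (hfix : Tendsto (fun n => proportion {q : (G →* Equiv.Perm (Fin n)) × Fin n | q.1 g q.2 = q.2})
      atTop (𝓝 0)) :
    (fun n : ℕ => subgroupExp G n (fun H => fixedCosetCount g H)) =o[atTop]
      (fun n : ℕ => (n : ℝ)) := by
  have hne : ∀ᶠ n : ℕ in atTop, n ≠ 0 := eventually_ne_atTop 0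
  rw [isLittleO_iff_tendsto' (hne.mono fun n hn h => absurd (Nat.cast_eq_zero.mp h) hn)]
  refine squeeze_zero' (Eventually.of_forall fun n => ?_)
    (hne.mono fun n hn => subgroupExp_fixedCosetCount_div_le hn g)
    (by simpa only [zero_div] using! hfix.div htrans one_ne_zero)
  exact div_nonneg (div_nonneg (tsum_nonneg fun _ => Nat.cast_nonneg _) (Nat.cast_nonneg _))
    (Nat.cast_nonneg _)

end CosetRepresentations

section Trajectories

variable {ι : Type*}

/-- The value of the word `x_{i₁}^{e₁} ⋯ x_{iₖ}^{eₖ}`, encoded as the list of the pairs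
`(i₁, e₁), …, (iₖ, eₖ)`. -/
def wordProd {M : Type*} [Monoid M] (x : ι → M) (w : List (ι × ℕ)) : M :=
  (w.map fun a => x a.1 ^ a.2).prod

lemma wordProd_cons {M : Type*} [Monoid M] (x : ι → M) (a : ι × ℕ) (w : List (ι × ℕ)) :
    wordProd x (a :: w) = x a.1 ^ a.2 * wordProd x w := List.prod_cons

/-- Reduced words in a free product of cyclic groups of orders `p i`: no syllable is trivial and
consecutive syllables lie in different factors. -/
def IsReducedWord (p : ι → ℕ) (w : List (ι × ℕ)) : Prop :=
  (∀ a ∈ w, ¬ p a.1 ∣ a.2) ∧ w.IsChain fun a b => a.1 ≠ b.1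

/-- Families of permutations of `α` satisfying the relations `σ i ^ p i = 1`. -/
abbrev TorsionTuple (p : ι → ℕ) (α : Type*) : Type _ := ∀ i, TorsionPerm (p i) α

variable {p : ι → ℕ} {α : Type*}

/-- The endpoint of the walk from `v` that applies the syllables of `w` from right to left. -/
def endpoint (σ : TorsionTuple p α) (v : α) (w : List (ι × ℕ)) : α :=
  wordProd (fun i => (σ i).1) w v

/-- The points met by the walk from `v` along `w`, the last one first. -/
def visited (σ : TorsionTuple p α) (v : α) (w : List (ι × ℕ)) : List α :=
  w.tails.map (endpoint σ v)

variable {σ : TorsionTuple p α} {v : α} {a : ι × ℕ} {w : List (ι × ℕ)}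

lemma endpoint_cons :
    endpoint σ v (a :: w) = ((σ a.1).1 ^ a.2) (endpoint σ v w) := by
  rw [endpoint, wordProd_cons, Equiv.Perm.mul_apply, endpoint]

lemma visited_cons : visited σ v (a :: w) = endpoint σ v (a :: w) :: visited σ v w := rfl

lemma length_visited : (visited σ v w).length = w.length + 1 := by
  rw [visited, List.length_map, List.length_tails]

lemma endpoint_mem_visited : endpoint σ v w ∈ visited σ v w :=
  List.mem_map_of_mem ((List.mem_tails _ _).mpr List.suffix_rfl)

lemma start_mem_visited : v ∈ visited σ v w :=
  List.mem_map.mpr ⟨[], (List.mem_tails _ _).mpr List.nil_suffix, rfl⟩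

/-- The points that share a `σ j`-cycle, for some `j ≠ i`, with a point of `l`. -/
def cyclesThrough (σ : TorsionTuple p α) (i : ι) (l : List α) : Set α :=
  {x | ∃ j ≠ i, ∃ y ∈ l, (σ j).1.SameCycle x y}

/-- The walk from `v` along `w` is generic if every new point reached by a syllable in `σ i` lies,
for all `j ≠ i`, in a `σ j`-cycle that the walk has not met before. -/
def IsGenericWalk (σ : TorsionTuple p α) (v : α) : List (ι × ℕ) → Prop
  | [] => True
  | a :: w => IsGenericWalk σ v w ∧ endpoint σ v (a :: w) ∉ cyclesThrough σ a.1 (visited σ v w)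

lemma IsGenericWalk.endpoint_notMem_visited [Nontrivial ι] (h : IsGenericWalk σ v (a :: w)) :
    endpoint σ v (a :: w) ∉ visited σ v w := fun hmem => by
  obtain ⟨j, hj⟩ := exists_ne a.1
  exact h.2 ⟨j, hj, _, hmem, Equiv.Perm.SameCycle.refl _ _⟩

lemma IsGenericWalk.endpoint_ne_start [Nontrivial ι] (h : IsGenericWalk σ v w) (hw : w ≠ []) :
    endpoint σ v w ≠ v := by
  obtain ⟨a, u, rfl⟩ := List.exists_cons_of_ne_nil hw
  intro heq
  have hstart : v ∈ visited σ v u := start_mem_visited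
  exact h.endpoint_notMem_visited (by rwa [heq])

lemma IsGenericWalk.endpoint_cons_eq_of_mem_visited {b : ι × ℕ} (h : IsGenericWalk σ v (b :: w))
    (hab : a.1 ≠ b.1) (hmem : endpoint σ v (a :: b :: w) ∈ visited σ v (b :: w)) :
    ((σ a.1).1 ^ a.2) (endpoint σ v (b :: w)) = endpoint σ v (b :: w) := by
  rw [visited_cons, List.mem_cons, endpoint_cons] at hmem
  refine hmem.resolve_right fun hold => h.2 ⟨a.1, hab, _, hold, a.2, ?_⟩
  rw [zpow_natCast]

section Exchange

/-- The triples `((σ, v), c)` for which neither the endpoint of the walk from `v` along `a :: w` nor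
`c` is met by the walk along `w`. -/
def exchangeable (p : ι → ℕ) (α : Type*) (a : ι × ℕ) (w : List (ι × ℕ)) :
    Set ((TorsionTuple p α × α) × α) :=
  {z | endpoint z.1.1 z.1.2 (a :: w) ∉ visited z.1.1 z.1.2 w ∧ z.2 ∉ visited z.1.1 z.1.2 w}

lemma swap_apply_of_mem_visited [DecidableEq α] {z : (TorsionTuple p α × α) × α}
    (hz : z ∈ exchangeable p α a w) :
    ∀ y ∈ visited z.1.1 z.1.2 w, Equiv.swap (endpoint z.1.1 z.1.2 (a :: w)) z.2 y = y :=
  fun _ hy => Equiv.swap_apply_of_ne_of_ne (ne_of_mem_of_not_mem hy hz.1)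
    (ne_of_mem_of_not_mem hy hz.2)

variable [DecidableEq ι]

/-- The family `σ` with its `i`-th member conjugated by `τ`. -/
def conjAt (σ : TorsionTuple p α) (i : ι) (τ : Equiv.Perm α) : TorsionTuple p α :=
  Function.update σ i ⟨τ * (σ i).1 * τ⁻¹, by rw [conj_pow, (σ i).2, mul_one, mul_inv_cancel]⟩

lemma conjAt_of_ne {i j : ι} (hj : j ≠ i) (τ : Equiv.Perm α) : conjAt σ i τ j = σ j :=
  Function.update_of_ne hj _ _

lemma coe_conjAt_self (i : ι) (τ : Equiv.Perm α) :
    (conjAt σ i τ i).1 = τ * (σ i).1 * τ⁻¹ := by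
  rw [conjAt, Function.update_self]

lemma conjAt_injective (i : ι) (τ : Equiv.Perm α) :
    Function.Injective fun σ : TorsionTuple p α => conjAt σ i τ := by
  intro σ ρ h
  funext j
  have hj : conjAt σ i τ j = conjAt ρ i τ j := congrFun h j
  by_cases hji : j = i
  · subst hji
    rw [Subtype.ext_iff, coe_conjAt_self, coe_conjAt_self] at hj
    exact Subtype.ext (mul_left_cancel (mul_right_cancel hj))
  · rwa [conjAt_of_ne hji, conjAt_of_ne hji] at hj

lemma conjAt_pow_apply {i : ι} {τ : Equiv.Perm α} {x : α} (hx : τ x = x) (e : ℕ) :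
    ((conjAt σ i τ i).1 ^ e) x = τ (((σ i).1 ^ e) x) := by
  rw [coe_conjAt_self, conj_pow, Equiv.Perm.mul_apply, Equiv.Perm.mul_apply,
    Equiv.Perm.inv_eq_iff_eq.mpr hx.symm]

lemma endpoint_conjAt {i : ι} {τ : Equiv.Perm α} (hτ : ∀ y ∈ visited σ v w, τ y = y) :
    endpoint (conjAt σ i τ) v w = endpoint σ v w := by
  induction w with
  | nil => rfl
  | cons a w ih =>
    rw [visited_cons, List.forall_mem_cons] at hτ
    rw [endpoint_cons, ih hτ.2]
    by_cases hai : a.1 = i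
    · rw [← hai, conjAt_pow_apply (hτ.2 _ endpoint_mem_visited), ← endpoint_cons, hτ.1]
    · rw [conjAt_of_ne hai, endpoint_cons]

lemma visited_conjAt {i : ι} {τ : Equiv.Perm α} (hτ : ∀ y ∈ visited σ v w, τ y = y) :
    visited (conjAt σ i τ) v w = visited σ v w := by
  induction w with
  | nil => rfl
  | cons a w ih =>
    have hτw : ∀ y ∈ visited σ v w, τ y = y := (List.forall_mem_cons.mp hτ).2
    rw [visited_cons, visited_cons, endpoint_conjAt hτ, ih hτw]

lemma endpoint_cons_conjAt {τ : Equiv.Perm α} (hτ : ∀ y ∈ visited σ v w, τ y = y) :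
    endpoint (conjAt σ a.1 τ) v (a :: w) = τ (endpoint σ v (a :: w)) := by
  rw [endpoint_cons, endpoint_conjAt hτ, conjAt_pow_apply (hτ _ endpoint_mem_visited),
    endpoint_cons]

variable [DecidableEq α]

/-- Swap the endpoint of the walk along `a :: w` with the auxiliary point `c` by conjugating
`σ a.1` with the transposition of the two points. -/
def exchange (a : ι × ℕ) (w : List (ι × ℕ)) (z : (TorsionTuple p α × α) × α) :
    (TorsionTuple p α × α) × α :=
  ((conjAt z.1.1 a.1 (Equiv.swap (endpoint z.1.1 z.1.2 (a :: w)) z.2), z.1.2),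
    endpoint z.1.1 z.1.2 (a :: w))

variable {z : (TorsionTuple p α × α) × α}

lemma visited_exchange (hz : z ∈ exchangeable p α a w) :
    visited (exchange a w z).1.1 (exchange a w z).1.2 w = visited z.1.1 z.1.2 w :=
  visited_conjAt (swap_apply_of_mem_visited hz)

lemma endpoint_exchange (hz : z ∈ exchangeable p α a w) :
    endpoint (exchange a w z).1.1 (exchange a w z).1.2 (a :: w) = z.2 :=
  (endpoint_cons_conjAt (swap_apply_of_mem_visited hz)).trans (Equiv.swap_apply_left _ _)

lemma injOn_exchange : Set.InjOn (exchange a w) (exchangeable p α a w) := by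
  intro z hz z' hz' h
  have hpoint : z.2 = z'.2 := by rw [← endpoint_exchange hz, h, endpoint_exchange hz']
  have hstart : z.1.2 = z'.1.2 := congrArg (fun y => y.1.2) h
  have hend : endpoint z.1.1 z.1.2 (a :: w) = endpoint z'.1.1 z'.1.2 (a :: w) :=
    congrArg Prod.snd h
  have hconj : (exchange a w z).1.1 = (exchange a w z').1.1 := congrArg (fun y => y.1.1) h
  rw [exchange, exchange, hend, hpoint] at hconj
  exact Prod.ext (Prod.ext (conjAt_injective _ _ hconj) hstart) hpoint

end Exchange

-- Exchanging the endpoint with a random unvisited point shows that, as long as it is not itself a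
-- visited point, the endpoint is almost uniformly distributed.
lemma proportion_endpoint_mem_le [Finite ι] [Finite α] (a : ι × ℕ) (w : List (ι × ℕ))
    (hcard : 2 * (w.length + 1) ≤ Nat.card α) {S : TorsionTuple p α → List α → Set α}
    (hS : ∀ σ ρ l, (∀ j ≠ a.1, σ j = ρ j) → S σ l = S ρ l) :
    proportion {q : TorsionTuple p α × α | endpoint q.1 q.2 (a :: w) ∉ visited q.1 q.2 w ∧
        endpoint q.1 q.2 (a :: w) ∈ S q.1 (visited q.1 q.2 w)} ≤
      2 * proportion {z : (TorsionTuple p α × α) × α | z.2 ∈ S z.1.1 (visited z.1.1 z.1.2 w)} := by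
  classical
  have : Nonempty α := (Nat.card_pos_iff.mp (by omega)).1
  set B := {q : TorsionTuple p α × α | endpoint q.1 q.2 (a :: w) ∉ visited q.1 q.2 w ∧
    endpoint q.1 q.2 (a :: w) ∈ S q.1 (visited q.1 q.2 w)}
  let T : Set ((TorsionTuple p α × α) × α) := {z | z.1 ∈ B ∧ z.2 ∉ visited z.1.1 z.1.2 w}
  have hTexch : T ⊆ exchangeable p α a w := fun z hz => ⟨hz.1.1, hz.2⟩
  have hhalf : proportion B * (1 / 2) ≤ proportion T := by
    refine proportion_mul_le_of_forall_le_fiber fun q hq => ?_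
    exact (half_le_proportion_notMem_list (l := visited q.1 q.2 w) (by rwa [length_visited])).trans
      (proportion_mono fun c hc => ⟨hq, hc⟩)
  have hexch : proportion T ≤ proportion {z : (TorsionTuple p α × α) × α |
      z.2 ∈ S z.1.1 (visited z.1.1 z.1.2 w)} := by
    refine proportion_le_of_injOn (exchange a w) (fun z hz => ?_) (injOn_exchange.mono hTexch)
    rw [Set.mem_ofPred_eq, visited_exchange (hTexch hz),
      hS (exchange a w z).1.1 z.1.1 _ fun j hj => conjAt_of_ne hj _]
    exact hz.1.2
  linarith

lemma ncard_sameCycle_le {k : ℕ} (hk : k ≠ 0) (τ : TorsionPerm k α) (y : α) :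
    {x | τ.1.SameCycle x y}.ncard ≤ k := by
  have horder : orderOf τ.1 ∣ k := orderOf_dvd_of_pow_eq_one τ.2
  have hfin : (Subgroup.zpowers τ.1 : Set (Equiv.Perm α)).Finite :=
    Nat.finite_of_card_ne_zero <| by
      rw [SetLike.coe_sort_coe, Nat.card_zpowers]
      exact ne_zero_of_dvd_ne_zero hk horder
  have hsub : {x | τ.1.SameCycle x y} ⊆ (fun g : Equiv.Perm α => g y) '' Subgroup.zpowers τ.1 :=
    fun x hx => hx.symm.elim fun i hi => ⟨τ.1 ^ i, ⟨i, rfl⟩, hi⟩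
  calc {x | τ.1.SameCycle x y}.ncard
      ≤ (Subgroup.zpowers τ.1 : Set (Equiv.Perm α)).ncard :=
        (Set.ncard_le_ncard hsub (hfin.image _)).trans (Set.ncard_image_le hfin)
    _ ≤ k := by
        rw [← Nat.card_coe_set_eq, SetLike.coe_sort_coe, Nat.card_zpowers]
        exact Nat.le_of_dvd (Nat.pos_of_ne_zero hk) horder

lemma ncard_cyclesThrough_le [Fintype ι] [Finite α] (hp : ∀ i, p i ≠ 0) (σ : TorsionTuple p α)
    (i : ι) (l : List α) : (cyclesThrough σ i l).ncard ≤ (∑ j, p j) * l.length := by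
  classical
  have hsub : cyclesThrough σ i l ⊆
      ⋃ j ∈ Finset.univ, ⋃ y ∈ l.toFinset, {x | (σ j).1.SameCycle x y} := by
    rintro x ⟨j, -, y, hy, hxy⟩
    simp only [Set.mem_iUnion]
    exact ⟨j, Finset.mem_univ j, y, List.mem_toFinset.mpr hy, hxy⟩
  have hcycles (j : ι) : (⋃ y ∈ l.toFinset, {x | (σ j).1.SameCycle x y}).ncard ≤
      p j * l.length :=
    calc _ ≤ ∑ y ∈ l.toFinset, {x | (σ j).1.SameCycle x y}.ncard := Finset.set_ncard_biUnion_le _ _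
      _ ≤ l.toFinset.card • p j := Finset.sum_le_card_nsmul _ _ _ fun y _ =>
          ncard_sameCycle_le (hp j) (σ j) y
      _ ≤ p j * l.length := by
          rw [smul_eq_mul, mul_comm]
          exact Nat.mul_le_mul_left _ l.toFinset_card_le
  calc (cyclesThrough σ i l).ncard
      ≤ ∑ j, (⋃ y ∈ l.toFinset, {x | (σ j).1.SameCycle x y}).ncard :=
        (Set.ncard_le_ncard hsub).trans (Finset.set_ncard_biUnion_le _ _)
    _ ≤ (∑ j, p j) * l.length := by
        rw [Finset.sum_mul]
        exact Finset.sum_le_sum fun j _ => hcycles j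

lemma proportion_endpoint_mem_cyclesThrough_le [Fintype ι] [Finite α] (hp : ∀ i, p i ≠ 0)
    (a : ι × ℕ) (w : List (ι × ℕ)) (hcard : 2 * (w.length + 1) ≤ Nat.card α) :
    proportion {q : TorsionTuple p α × α | endpoint q.1 q.2 (a :: w) ∉ visited q.1 q.2 w ∧
        endpoint q.1 q.2 (a :: w) ∈ cyclesThrough q.1 a.1 (visited q.1 q.2 w)} ≤
      2 * (((∑ j, p j) * (w.length + 1) : ℕ) / Nat.card α) := by
  refine (proportion_endpoint_mem_le a w hcard (S := fun σ l => cyclesThrough σ a.1 l)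
    fun σ ρ l h => ?_).trans ?_
  · ext x
    exact exists_congr fun j => and_congr_right fun hj => by rw [h j hj]
  · gcongr
    refine proportion_le_of_forall_fiber_le (by positivity) fun q => ?_
    rw [proportion]
    have hle := ncard_cyclesThrough_le hp q.1 a.1 (visited q.1 q.2 w)
    rw [length_visited] at hle
    gcongr
    exact hle

lemma tendsto_proportion_coordinate_pow_apply_eq_self [Finite ι] (hp : ∀ i, p i ≠ 0)
    (ha : ¬ p a.1 ∣ a.2) :
    Tendsto (fun n => proportion {q : TorsionTuple p (Fin n) × Fin n |
      ((q.1 a.1).1 ^ a.2) q.2 = q.2}) atTop (𝓝 0) :=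
  (tendsto_proportion_pow_apply_eq_self (hp a.1) ha).congr fun n =>
    (proportion_preimage_coordinate (β := fun i => TorsionPerm (p i) (Fin n)) a.1
      {z : TorsionPerm (p a.1) (Fin n) × Fin n | (z.1.1 ^ a.2) z.2 = z.2}).symm

lemma tendsto_proportion_endpoint_mem_visited [Finite ι] (hp : ∀ i, p i ≠ 0)
    (hw : IsReducedWord p (a :: w)) :
    Tendsto (fun n => proportion {q : TorsionTuple p (Fin n) × Fin n |
      IsGenericWalk q.1 q.2 w ∧ endpoint q.1 q.2 (a :: w) ∈ visited q.1 q.2 w}) atTop (𝓝 0) := by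
  have hfix := tendsto_proportion_coordinate_pow_apply_eq_self hp (hw.1 a List.mem_cons_self)
  cases w with
  | nil =>
    refine squeeze_zero (fun n => proportion_nonneg _)
      (fun n => proportion_mono fun q hq => ?_) hfix
    exact List.mem_singleton.mp hq.2
  | cons b u =>
    have hab : a.1 ≠ b.1 := (List.isChain_cons_cons.mp hw.2).1
    have : Nontrivial ι := ⟨a.1, b.1, hab⟩
    refine squeeze_zero' (Eventually.of_forall fun n => proportion_nonneg _) ?_
      (by simpa only [mul_zero] using hfix.const_mul 2)
    filter_upwards [eventually_ge_atTop (2 * (u.length + 1))] with n hn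
    have : Nonempty (Fin n) := ⟨⟨0, by omega⟩⟩
    rw [← proportion_preimage_fst_fst_prod (γ := Fin n)
      {q : TorsionTuple p (Fin n) × Fin n | ((q.1 a.1).1 ^ a.2) q.2 = q.2}]
    refine le_trans (proportion_mono fun q hq => ?_) (proportion_endpoint_mem_le b u
      (by rwa [Nat.card_fin]) (S := fun σ _ => {x | ((σ a.1).1 ^ a.2) x = x})
      fun σ ρ _ h => by rw [h a.1 hab])
    exact ⟨hq.1.endpoint_notMem_visited, hq.1.endpoint_cons_eq_of_mem_visited hab hq.2⟩

lemma tendsto_proportion_endpoint_mem_cyclesThrough [Finite ι] (hp : ∀ i, p i ≠ 0)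
    (a : ι × ℕ) (w : List (ι × ℕ)) :
    Tendsto (fun n => proportion {q : TorsionTuple p (Fin n) × Fin n |
      endpoint q.1 q.2 (a :: w) ∉ visited q.1 q.2 w ∧
        endpoint q.1 q.2 (a :: w) ∈ cyclesThrough q.1 a.1 (visited q.1 q.2 w)}) atTop (𝓝 0) := by
  have := Fintype.ofFinite ι
  refine squeeze_zero' (Eventually.of_forall fun n => proportion_nonneg _) ?_
    (by simpa only [mul_zero] using
      (tendsto_const_div_atTop_nhds_zero_nat (((∑ j, p j) * (w.length + 1) : ℕ) : ℝ)).const_mul 2)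
  filter_upwards [eventually_ge_atTop (2 * (w.length + 1))] with n hn
  simpa only [Nat.card_fin] using
    proportion_endpoint_mem_cyclesThrough_le (α := Fin n) hp a w (by rwa [Nat.card_fin])

lemma tendsto_proportion_not_isGenericWalk [Finite ι] (hp : ∀ i, p i ≠ 0)
    (hw : IsReducedWord p w) :
    Tendsto (fun n => proportion {q : TorsionTuple p (Fin n) × Fin n | ¬ IsGenericWalk q.1 q.2 w})
      atTop (𝓝 0) := by
  induction w with
  | nil => simp [IsGenericWalk, proportion]
  | cons a w ih =>
    have hgeneric := ih ⟨fun b hb => hw.1 b (List.mem_cons_of_mem a hb), hw.2.tail⟩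
    have hvisited := tendsto_proportion_endpoint_mem_visited hp hw
    have hcycles := tendsto_proportion_endpoint_mem_cyclesThrough hp a w
    refine squeeze_zero (fun n => proportion_nonneg _) (fun n => ?_)
      (by simpa only [add_zero] using hgeneric.add (hvisited.add hcycles))
    refine (proportion_mono fun q hq => ?_).trans ((proportion_union_le _ _).trans
      (add_le_add_right (proportion_union_le _ _) _))
    simp only [IsGenericWalk, Set.mem_ofPred_eq, Set.mem_union] at hq ⊢
    tauto

theorem tendsto_proportion_wordProd_apply_eq_self [Finite ι] [Nontrivial ι] (hp : ∀ i, p i ≠ 0)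
    (hw : IsReducedWord p w) (hne : w ≠ []) :
    Tendsto (fun n => proportion {q : TorsionTuple p (Fin n) × Fin n |
      wordProd (fun i => (q.1 i).1) w q.2 = q.2}) atTop (𝓝 0) :=
  squeeze_zero (fun _ => proportion_nonneg _)
    (fun _ => proportion_mono fun _ hq (hgen : IsGenericWalk _ _ _) =>
      hgen.endpoint_ne_start hne hq)
    (tendsto_proportion_not_isGenericWalk hp hw)

end Trajectories

section ReducedWords

variable {ι G : Type*} [Group G] {x : ι → G} {p : ι → ℕ}

lemma map_wordProd {M N : Type*} [Monoid M] [Monoid N] (φ : M →* N) (x : ι → M) (w : List (ι × ℕ)) :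
    φ (wordProd x w) = wordProd (fun i => φ (x i)) w := by
  simp only [wordProd, map_list_prod, List.map_map, Function.comp_def, map_pow]

lemma pow_eq_one_of_dvd {y : G} {k e : ℕ} (hy : y ^ k = 1) (h : k ∣ e) : y ^ e = 1 :=
  orderOf_dvd_iff_pow_eq_one.mp ((orderOf_dvd_of_pow_eq_one hy).trans h)

lemma exists_isReducedWord_pow_mul (hx : ∀ i, x i ^ p i = 1) (a : ι × ℕ) {w : List (ι × ℕ)}
    (hw : IsReducedWord p w) :
    ∃ u, IsReducedWord p u ∧ wordProd x u = x a.1 ^ a.2 * wordProd x w := by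
  by_cases ha : p a.1 ∣ a.2
  · exact ⟨w, hw, by rw [pow_eq_one_of_dvd (hx a.1) ha, one_mul]⟩
  cases w with
  | nil =>
    exact ⟨[a], ⟨List.forall_mem_singleton.mpr ha, List.isChain_singleton a⟩, wordProd_cons ..⟩
  | cons b w =>
    obtain ⟨i, d⟩ := a
    obtain ⟨j, e⟩ := b
    have hwtail := List.forall_mem_cons.mp hw.1
    obtain rfl | hij := eq_or_ne i j
    · rw [wordProd_cons, ← mul_assoc, ← pow_add]
      by_cases hde : p i ∣ d + e
      · exact ⟨w, ⟨hwtail.2, hw.2.tail⟩, by rw [pow_eq_one_of_dvd (hx i) hde, one_mul]⟩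
      · exact ⟨(i, d + e) :: w, ⟨List.forall_mem_cons.mpr ⟨hde, hwtail.2⟩,
          List.isChain_cons.mpr (List.isChain_cons.mp hw.2)⟩, wordProd_cons ..⟩
    · exact ⟨(i, d) :: (j, e) :: w, ⟨List.forall_mem_cons.mpr ⟨ha, hw.1⟩,
        List.isChain_cons_cons.mpr ⟨hij, hw.2⟩⟩, wordProd_cons ..⟩

lemma exists_isReducedWord (hp : ∀ i, p i ≠ 0) (hx : ∀ i, x i ^ p i = 1)
    (hgen : Subgroup.closure (Set.range x) = ⊤) (g : G) :
    ∃ w, IsReducedWord p w ∧ wordProd x w = g := by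
  have hg : g ∈ Subgroup.closure (Set.range x) := hgen ▸ Subgroup.mem_top g
  induction hg using Subgroup.closure_induction_left with
  | one => exact ⟨[], ⟨by simp, List.isChain_nil⟩, rfl⟩
  | mul_left y hy k _ ih =>
    obtain ⟨i, rfl⟩ := hy
    obtain ⟨w, hw, rfl⟩ := ih
    simpa only [pow_one] using exists_isReducedWord_pow_mul hx (i, 1) hw
  | inv_mul_cancel y hy k _ ih =>
    obtain ⟨i, rfl⟩ := hy
    obtain ⟨w, hw, rfl⟩ := ih
    have hinv : x i ^ (p i - 1) = (x i)⁻¹ := by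
      rw [eq_inv_iff_mul_eq_one, pow_sub_one_mul (hp i), hx]
    simpa only [hinv] using exists_isReducedWord_pow_mul hx (i, p i - 1) hw

end ReducedWords

section CyclicFreeProduct

variable {m : ℕ} {p : Fin m → ℕ}

lemma of_pow_eq_one (i : Fin m) : (PresentedGroup.of i : CyclicFreeProduct m p) ^ p i = 1 :=
  PresentedGroup.one_of_mem (rels := cyclicRels m p) ⟨i, rfl⟩

instance : Group.FG (CyclicFreeProduct m p) :=
  Group.fg_of_surjective (PresentedGroup.mk_surjective _)

/-- The universal property of `C_{p_1} * ⋯ * C_{p_m}` for actions on `α`. -/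
def permRepEquiv (p : Fin m → ℕ) (α : Type*) :
    (CyclicFreeProduct m p →* Equiv.Perm α) ≃ TorsionTuple p α where
  toFun φ i := ⟨φ (PresentedGroup.of i), by rw [← map_pow, of_pow_eq_one, map_one]⟩
  invFun σ := PresentedGroup.toGroup (f := fun i => (σ i).1) <| by
    rintro _ ⟨i, rfl⟩
    rw [map_pow, FreeGroup.lift_apply_of, (σ i).2]
  left_inv φ := PresentedGroup.ext fun i => PresentedGroup.toGroup.of _
  right_inv σ := funext fun i => Subtype.ext (PresentedGroup.toGroup.of _)

lemma permRepCount_cyclicFreeProduct (n : ℕ) :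
    permRepCount (CyclicFreeProduct m p) n = ∏ i, torsionPermCount (p i) n :=
  (Nat.card_congr (permRepEquiv p (Fin n))).trans Nat.card_pi

lemma tendsto_permRepCount_cyclicFreeProduct_ratio (hp : ∀ i, p i ≠ 0) :
    Tendsto (fun n : ℕ => permRepCount (CyclicFreeProduct m p) n *
      (n + 1 : ℝ) ^ ((m : ℝ) - ∑ i, (1 : ℝ) / p i) / permRepCount (CyclicFreeProduct m p) (n + 1))
      atTop (𝓝 1) := by
  have hprod : Tendsto (fun n : ℕ => ∏ i, meanFixedPoints (p i) n / (n : ℝ) ^ (1 / p i : ℝ))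
      atTop (𝓝 1) := by
    simpa only [Finset.prod_const_one] using
      tendsto_finsetProd Finset.univ fun i _ => tendsto_meanFixedPoints_div_rpow (hp i)
  refine (hprod.comp (tendsto_add_atTop_nat 1)).congr fun n => ?_
  have hpos : (0 : ℝ) < (n : ℝ) + 1 := by positivity
  simp only [Function.comp_apply, meanFixedPoints, permRepCount_cyclicFreeProduct,
    Nat.add_sub_cancel, Finset.prod_div_distrib, Finset.prod_mul_distrib, Finset.prod_const,
    Finset.card_univ, Fintype.card_fin]
  push_cast
  rw [← Real.rpow_sum_of_pos hpos, Real.rpow_sub hpos, Real.rpow_natCast]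
  ring

lemma tendsto_proportion_cyclicFreeProduct_apply_eq_self [Nontrivial (Fin m)]
    (hp : ∀ i, p i ≠ 0) {g : CyclicFreeProduct m p} (hg : g ≠ 1) :
    Tendsto (fun n => proportion
      {q : (CyclicFreeProduct m p →* Equiv.Perm (Fin n)) × Fin n | q.1 g q.2 = q.2})
      atTop (𝓝 0) := by
  obtain ⟨w, hw, rfl⟩ :=
    exists_isReducedWord hp of_pow_eq_one (PresentedGroup.closure_range_of _) g
  have hne : w ≠ [] := by
    rintro rfl
    exact hg rfl
  refine (tendsto_proportion_wordProd_apply_eq_self hp hw hne).congr fun n => ?_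
  rw [← proportion_preimage_equiv ((permRepEquiv p (Fin n)).prodCongr (Equiv.refl _))]
  simp only [map_wordProd]
  rfl

end CyclicFreeProduct

theorem irs_limit_cyclicFreeProduct (m : ℕ) (p : Fin m → ℕ) (hp : ∀ i, 2 ≤ p i)
    (h : ∑ i, (1 : ℝ) / (p i : ℝ) < (m : ℝ) - 1)
    (g : CyclicFreeProduct m p) (hg : g ≠ 1) :
    (fun n : ℕ => subgroupExp (CyclicFreeProduct m p) n
        (fun H => (fixedCosetCount g H : ℝ))) =o[Filter.atTop] (fun n : ℕ => (n : ℝ)) := by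
  have hp0 (i : Fin m) : p i ≠ 0 := (two_pos.trans_le (hp i)).ne'
  have hm : 1 < m := by
    have hsum : (0 : ℝ) ≤ ∑ i, (1 : ℝ) / (p i : ℝ) := Finset.sum_nonneg fun i _ => by positivity
    exact_mod_cast (by linarith : (1 : ℝ) < m)
  have : Nontrivial (Fin m) := Fin.nontrivial_iff_two_le.mpr hm
  have htrans := tendsto_proportion_transitiveReps (CyclicFreeProduct m p)
    (δ := m - 1 - ∑ i, (1 : ℝ) / p i) (by linarith) <| by
      convert tendsto_permRepCount_cyclicFreeProduct_ratio hp0 using 5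
      ring
  exact subgroupExp_fixedCosetCount_isLittleO htrans
    (tendsto_proportion_cyclicFreeProduct_apply_eq_self hp0 hg)
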